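/- arXiv:1711.00211 — 4 statements merged into one kernel-verified Lean document; each statement's English description precedes it below -/
import Mathlib

section
/- Let 0 ≤ ε < 10⁻¹⁴ and let x_1, …, x_k be unit vectors in ℝ⁴ with k ≥ 120 such that the spherical distance δ(x_i, x_j) ≥ π/5 − 2ε for all i ≠ j. Then k = 120, and there exist unit vectors w_1, …, w_120 in ℝ⁴ with δ(w_i, w_j) ≥ π/5 for all i ≠ j (these are the vertices of a regular 600-cell inscribed in the unit sphere) such that δ(x_i, w_i) ≤ c·ε for all i, where c = 90¹¹⁶ · 10⁴ · 10¹². -/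
open scoped RealInnerProductSpace

/-!
The kernels `U l ⟪x, y⟫` on the three-sphere are positive definite, being characters of the
symmetric powers of the quaternions. The linear programming bound for the polynomial extremal for
120 points leaves no room for a 121st vector, and for 120 vectors it is almost attained: every
inner product is close to one occurring in the 600-cell, and those close to `φ / 2` are within
`O(ε)` of it.

A second linear programming bound gives a vector with many contacts, hence four vectors in mutual
contact, which lie within `O(ε)` of an exact tetrahedron. The doubled inner products with that
tetrahedron round to golden integers. The rounded coordinates of a unit vector satisfy the norm
equation approximately, hence exactly, since a nonzero golden integer with bounded conjugate is
bounded away from `0`. Its solutions are the vertices of a single 600-cell. This locates the vectors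
only up to a constant error; passing from three vertices of a cell to the fourth turns it into a
multiple of `ε`, and at most 16 such passages are needed, each costing a factor `9`.

The argument needs `ε ≤ 10⁻²⁰⁰`; for larger `ε` the asserted bound exceeds `π`.
-/

namespace SixHundredCell

open Polynomial Finset
open scoped goldenRatio

/-! ### Chebyshev kernels on the three-sphere -/

section SymmetricPower

open Equiv Matrix
open scoped ComplexOrder

variable {n R : Type*} (l : ℕ)

/-- The `l`-th Kronecker power of a matrix. -/
def tensorPow [CommMonoid R] (A : Matrix n n R) : Matrix (Fin l → n) (Fin l → n) R :=
  of fun f g ↦ ∏ i, A (f i) (g i)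

lemma tensorPow_conjTranspose [CommSemiring R] [StarRing R] (A : Matrix n n R) :
    tensorPow l Aᴴ = (tensorPow l A)ᴴ := by
  ext f g
  simp [tensorPow]

lemma tensorPow_mul [Fintype n] [CommSemiring R] (A B : Matrix n n R) :
    tensorPow l (A * B) = tensorPow l A * tensorPow l B := by
  classical
  ext f g
  simp [tensorPow, mul_apply, prod_univ_sum, prod_mul_distrib]

variable [DecidableEq n]

lemma tensorPow_diagonal [CommSemiring R] (w : n → R) :
    tensorPow l (diagonal w) = diagonal fun f ↦ ∏ i, w (f i) := by
  ext f g
  by_cases h : f = g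
  · simp [tensorPow, h]
  · obtain ⟨i, hi⟩ := Function.ne_iff.1 h
    simpa [tensorPow, h] using prod_eq_zero (mem_univ i) (diagonal_apply_ne w hi)

lemma tensorPow_one [CommSemiring R] : tensorPow l (1 : Matrix n n R) = 1 := by
  simp [← diagonal_one, tensorPow_diagonal]

/-- The sum of the permutation matrices by which the symmetric group acts on an `l`-th tensor
power: `l!` times the projection onto the symmetric tensors. -/
def symmetrizer (n R : Type*) [DecidableEq n] [Semiring R] :
    Matrix (Fin l → n) (Fin l → n) R :=
  of fun f g ↦ ∑ σ : Perm (Fin l), if f ∘ σ = g then 1 else 0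

lemma symmetrizer_conjTranspose [Semiring R] [StarRing R] :
    (symmetrizer l n R)ᴴ = symmetrizer l n R := by
  ext f g
  simp only [symmetrizer, conjTranspose_apply, of_apply, star_sum, apply_ite star, star_one,
    star_zero]
  refine Fintype.sum_equiv (Equiv.inv _) _ _ fun σ ↦ if_congr ?_ rfl rfl
  exact (σ.eq_comp_symm g f).symm.trans eq_comm

variable [Fintype n]

lemma symmetrizer_mul_apply [Semiring R] (M : Matrix (Fin l → n) (Fin l → n) R)
    (f g : Fin l → n) :
    (symmetrizer l n R * M) f g = ∑ σ : Perm (Fin l), M (f ∘ σ) g := by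
  simp only [symmetrizer, mul_apply, of_apply, sum_mul]
  rw [sum_comm]
  simp

lemma symmetrizer_mul_self [Semiring R] :
    symmetrizer l n R * symmetrizer l n R = (l.factorial : R) • symmetrizer l n R := by
  ext f g
  have reindex (σ : Perm (Fin l)) : symmetrizer l n R (f ∘ σ) g = symmetrizer l n R f g :=
    Fintype.sum_equiv (Equiv.mulLeft σ) _ _ fun τ ↦ rfl
  simp [symmetrizer_mul_apply, reindex, Fintype.card_perm]

lemma symmetrizer_mul_tensorPow [CommSemiring R] (A : Matrix n n R) :
    symmetrizer l n R * tensorPow l A = tensorPow l A * symmetrizer l n R := by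
  ext f g
  rw [symmetrizer_mul_apply]
  simp only [symmetrizer, mul_apply, of_apply, mul_sum]
  rw [sum_comm]
  refine Fintype.sum_congr _ _ fun σ ↦ ?_
  simp only [← Equiv.eq_comp_symm, mul_ite, mul_one, mul_zero, sum_ite_eq', mem_univ, if_true]
  exact Fintype.prod_equiv σ _ _ fun i ↦ by simp

/-- `l!` times the trace of the `l`-th symmetric power of a matrix. -/
def symTrace [CommSemiring R] (A : Matrix n n R) : R :=
  (symmetrizer l n R * tensorPow l A).trace

lemma symTrace_mul_mul_of_mul_eq_one [CommSemiring R] {U V : Matrix n n R} (h : V * U = 1)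
    (A : Matrix n n R) :
    symTrace l (U * A * V) = symTrace l A := by
  calc symTrace l (U * A * V)
      = ((tensorPow l V * symmetrizer l n R) * (tensorPow l U * tensorPow l A)).trace := by
        rw [symTrace, tensorPow_mul, ← mul_assoc, trace_mul_comm, tensorPow_mul, mul_assoc]
    _ = (symmetrizer l n R * (tensorPow l (V * U) * tensorPow l A)).trace := by
        rw [← symmetrizer_mul_tensorPow, tensorPow_mul, mul_assoc, mul_assoc]
    _ = symTrace l A := by rw [h, tensorPow_one, one_mul, symTrace]

lemma sum_mul_symTrace_nonneg {ι : Type*} (s : Finset ι) (a : ι → ℝ) (X : ι → Matrix n n ℂ) :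
    0 ≤ ∑ i ∈ s, ∑ j ∈ s, (a i * a j : ℂ) * symTrace l (X i * (X j)ᴴ) := by
  set Y := ∑ i ∈ s, (a i : ℂ) • tensorPow l (X i) with hY
  set S := symmetrizer l n ℂ with hS
  have hsum : ∑ i ∈ s, ∑ j ∈ s, (a i * a j : ℂ) * symTrace l (X i * (X j)ᴴ) =
      (S * (Y * Yᴴ)).trace := by
    rw [hY, conjTranspose_sum, sum_mul_sum]
    simp only [mul_sum, trace_sum, symTrace, tensorPow_mul, tensorPow_conjTranspose,
      conjTranspose_smul, smul_mul_assoc, mul_smul_comm, trace_smul, smul_eq_mul,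
      Complex.star_def, Complex.conj_ofReal, ← hS]
    exact sum_congr rfl fun i _ ↦ sum_congr rfl fun j _ ↦ by ring
  have hsq : (l.factorial : ℂ) * (S * (Y * Yᴴ)).trace = ((S * Y) * (S * Y)ᴴ).trace := by
    rw [← smul_eq_mul, ← trace_smul, ← smul_mul_assoc, hS, ← symmetrizer_mul_self, mul_assoc,
      trace_mul_comm, conjTranspose_mul, symmetrizer_conjTranspose]
    simp only [mul_assoc]
  have hpos : (0 : ℂ) < l.factorial := by exact_mod_cast l.factorial_pos
  rw [hsum]
  refine le_of_mul_le_mul_left ?_ hpos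
  rw [mul_zero, hsq]
  exact (posSemidef_self_mul_conjTranspose _).trace_nonneg

lemma symmetrizer_apply_self [CommSemiring R] (f : Fin l → n) :
    symmetrizer l n R f f = ∏ i, ((#{a | f a = i}).factorial : R) := by
  have h := DomMulAct.stabilizer_card f
  simp only [Fintype.card_subtype] at h
  simp only [symmetrizer, of_apply, sum_boole]
  exact_mod_cast congrArg (Nat.cast (R := R)) h

lemma symTrace_diagonal_fin_two [CommSemiring R] (w : Fin 2 → R) :
    symTrace l (diagonal w) = l.factorial * ∑ m ∈ range (l + 1), w 0 ^ m * w 1 ^ (l - m) := by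
  let zeroSet : (Fin l → Fin 2) ≃ Finset (Fin l) :=
    { toFun f := {a | f a = 0}
      invFun s a := if a ∈ s then 0 else 1
      left_inv f := by ext a; by_cases h : f a = 0 <;> simp [h]; omega
      right_inv s := by ext a; by_cases h : a ∈ s <;> simp [h] }
  let term (m : ℕ) : R := m.factorial * (l - m).factorial * (w 0 ^ m * w 1 ^ (l - m))
  have hterm (f : Fin l → Fin 2) :
      symmetrizer l (Fin 2) R f f * ∏ i, w (f i) = term #(zeroSet f) := by
    have hone : #{a | f a = 1} = l - #{a | f a = 0} := by
      have h := card_filter_add_card_filter_not (s := univ) (fun a ↦ f a = 0)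
      simp only [show ∀ i : Fin 2, ¬i = 0 ↔ i = 1 by decide, card_univ, Fintype.card_fin] at h
      omega
    have hprod : ∏ i, w (f i) = ∏ j, w j ^ #{a | f a = j} := by
      simp [← prod_fiberwise' univ f w]
    rw [symmetrizer_apply_self, hprod, Fin.prod_univ_two, Fin.prod_univ_two, hone]
    rfl
  calc symTrace l (diagonal w)
      = ∑ f : Fin l → Fin 2, term #(zeroSet f) := by
        simp only [symTrace, tensorPow_diagonal, trace, diag_apply, mul_diagonal, hterm]
    _ = ∑ m ∈ range (l + 1), l.choose m • term m := by
        rw [Equiv.sum_comp zeroSet fun s ↦ term #s, ← powerset_univ, sum_powerset_apply_card,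
          card_univ, Fintype.card_fin]
    _ = _ := by
        rw [mul_sum]
        refine sum_congr rfl fun m hm ↦ ?_
        rw [← Nat.choose_mul_factorial_mul_factorial (mem_range_succ_iff.1 hm), nsmul_eq_mul]
        push_cast
        ring

end SymmetricPower

section Chebyshev

open Matrix

lemma sum_pow_mul_pow_eq_eval_U {R : Type*} [CommRing R] {w z t : R} (ht : w + z = 2 * t)
    (h : w * z = 1) (l : ℕ) :
    ∑ m ∈ range (l + 1), w ^ m * z ^ (l - m) = (Chebyshev.U R l).eval t := by
  have hsucc (l : ℕ) : ∑ m ∈ range (l + 1 + 1), w ^ m * z ^ (l + 1 - m) =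
      z * ∑ m ∈ range (l + 1), w ^ m * z ^ (l - m) + w ^ (l + 1) := by
    rw [sum_range_succ, Nat.sub_self, pow_zero, mul_one, mul_sum]
    congr 1
    refine sum_congr rfl fun m hm ↦ ?_
    rw [Nat.succ_sub (mem_range_succ_iff.1 hm), pow_succ]
    ring
  induction l using Nat.twoStepInduction with
  | zero => simp
  | one => simp [sum_range_succ, ← ht, add_comm]
  | more l ih₀ ih₁ =>
    have hU := congrArg (eval t) (Chebyshev.U_add_two R l)
    simp only [eval_sub, eval_mul, eval_ofNat, eval_X] at hU
    rw [hsucc] at ih₁ ⊢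
    push_cast at ih₁ ⊢
    rw [hU, ← ih₁, ← ih₀, ← ht, hsucc]
    linear_combination -(∑ m ∈ range (l + 1), w ^ m * z ^ (l - m)) * h

/-- The quaternion `x 0 + x 1 i + x 2 j + x 3 k` as a complex matrix. -/
noncomputable def quaternionMatrix (x : EuclideanSpace ℝ (Fin 4)) : Matrix (Fin 2) (Fin 2) ℂ :=
  !![x 0 + x 1 * Complex.I, x 2 + x 3 * Complex.I; -x 2 + x 3 * Complex.I, x 0 - x 1 * Complex.I]

lemma quaternionMatrix_det (x : EuclideanSpace ℝ (Fin 4)) :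
    (quaternionMatrix x).det = (‖x‖ ^ 2 : ℝ) := by
  simp only [quaternionMatrix, det_fin_two_of, EuclideanSpace.norm_sq_eq, Fin.sum_univ_four,
    Real.norm_eq_abs, sq_abs]
  push_cast
  linear_combination (-(x 1 : ℂ) ^ 2 - (x 3 : ℂ) ^ 2) * Complex.I_sq

lemma quaternionMatrix_conjTranspose (x : EuclideanSpace ℝ (Fin 4)) :
    (quaternionMatrix x)ᴴ = (quaternionMatrix x).adjugate := by
  rw [adjugate_fin_two]
  ext i j
  fin_cases i <;> fin_cases j <;> simp [quaternionMatrix, sub_eq_add_neg, add_comm]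

lemma quaternionMatrix_mul_conjTranspose_trace (x y : EuclideanSpace ℝ (Fin 4)) :
    (quaternionMatrix x * (quaternionMatrix y)ᴴ).trace = 2 * ⟪x, y⟫ := by
  rw [quaternionMatrix_conjTranspose, quaternionMatrix, quaternionMatrix, adjugate_fin_two_of,
    mul_fin_two, trace_fin_two_of]
  simp only [PiLp.inner_apply, Fin.sum_univ_four, RCLike.inner_apply, conj_trivial]
  push_cast
  linear_combination (-2 * (x 1 : ℂ) * y 1 - 2 * (x 3 : ℂ) * y 3) * Complex.I_sq

/-- Matrices with `Aᴴ = A.adjugate` represent quaternions: their anti-Hermitian part is traceless,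
so they are normal, hence diagonalizable. -/
lemma exists_eq_mul_diagonal_mul {A : Matrix (Fin 2) (Fin 2) ℂ} (hA : Aᴴ = A.adjugate) :
    ∃ (U V : Matrix (Fin 2) (Fin 2) ℂ) (w : Fin 2 → ℂ), V * U = 1 ∧ A = U * diagonal w * V := by
  have hH : (Complex.I • (A - Aᴴ)).IsHermitian := by
    rw [IsHermitian, conjTranspose_smul, conjTranspose_sub, conjTranspose_conjTranspose,
      Complex.star_def, Complex.conj_I, neg_smul, ← smul_neg, neg_sub]
  have hsum : A + Aᴴ = A.trace • 1 := by
    rw [hA, adjugate_fin_two]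
    ext i j
    fin_cases i <;> fin_cases j <;> simp [trace_fin_two, add_comm]
  set U := hH.eigenvectorUnitary with hU
  refine ⟨U, star (U : Matrix (Fin 2) (Fin 2) ℂ),
    fun i ↦ A.trace / 2 - Complex.I / 2 * hH.eigenvalues i, U.2.1, ?_⟩
  have hspec := hH.spectral_theorem
  rw [Unitary.conjStarAlgAut_apply, ← hU] at hspec
  have hw : diagonal (fun i ↦ A.trace / 2 - Complex.I / 2 * hH.eigenvalues i) =
      (A.trace / 2) • (1 : Matrix (Fin 2) (Fin 2) ℂ) -
        (Complex.I / 2) • diagonal (RCLike.ofReal ∘ hH.eigenvalues) := by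
    ext i j
    fin_cases i <;> fin_cases j <;> simp
  have hUU : (U : Matrix (Fin 2) (Fin 2) ℂ) * star (U : Matrix (Fin 2) (Fin 2) ℂ) = 1 := U.2.2
  rw [hw, mul_sub, sub_mul, mul_smul_comm, smul_mul_assoc, mul_one, hUU, mul_smul_comm,
    smul_mul_assoc, ← hspec, smul_smul, div_mul_eq_mul_div, Complex.I_mul_I, div_eq_inv_mul,
    ← smul_smul, ← hsum]
  module

lemma symTrace_eq_eval_U {A : Matrix (Fin 2) (Fin 2) ℂ} {t : ℂ} (hA : Aᴴ = A.adjugate)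
    (htr : A.trace = 2 * t) (hdet : A.det = 1) (l : ℕ) :
    symTrace l A = l.factorial * (Chebyshev.U ℂ l).eval t := by
  obtain ⟨U, V, w, hVU, rfl⟩ := exists_eq_mul_diagonal_mul hA
  rw [trace_mul_comm, ← mul_assoc, hVU, one_mul, trace_fin_two, diagonal_apply_eq,
    diagonal_apply_eq] at htr
  rw [det_mul_comm, ← mul_assoc, hVU, one_mul, det_diagonal, Fin.prod_univ_two] at hdet
  rw [symTrace_mul_mul_of_mul_eq_one l hVU, symTrace_diagonal_fin_two,
    sum_pow_mul_pow_eq_eval_U htr hdet]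

lemma symTrace_quaternionMatrix {x y : EuclideanSpace ℝ (Fin 4)} (hx : ‖x‖ = 1) (hy : ‖y‖ = 1)
    (l : ℕ) :
    symTrace l (quaternionMatrix x * (quaternionMatrix y)ᴴ) =
      (l.factorial * (Chebyshev.U ℝ l).eval ⟪x, y⟫ : ℝ) := by
  rw [symTrace_eq_eval_U _ (quaternionMatrix_mul_conjTranspose_trace x y)]
  · push_cast [Chebyshev.complex_ofReal_eval_U]
    rfl
  · rw [det_mul, det_conjTranspose, quaternionMatrix_det, quaternionMatrix_det, hx, hy]
    simp
  · rw [conjTranspose_mul, conjTranspose_conjTranspose, adjugate_mul_distrib,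
      quaternionMatrix_conjTranspose y, adjugate_adjugate _ (by simp),
      ← quaternionMatrix_conjTranspose]
    simp

/-- The Chebyshev polynomials `U l` are the zonal spherical functions of the three-sphere. -/
lemma sum_mul_eval_U_inner_nonneg {ι : Type*} (s : Finset ι) (a : ι → ℝ)
    {x : ι → EuclideanSpace ℝ (Fin 4)} (hx : ∀ i, ‖x i‖ = 1) (l : ℕ) :
    0 ≤ ∑ i ∈ s, ∑ j ∈ s, a i * a j * (Chebyshev.U ℝ l).eval ⟪x i, x j⟫ := by
  have h := sum_mul_symTrace_nonneg l s a fun i ↦ quaternionMatrix (x i)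
  simp only [symTrace_quaternionMatrix (hx _) (hx _)] at h
  have hfac : (0 : ℝ) < l.factorial := by exact_mod_cast l.factorial_pos
  refine (mul_nonneg_iff_of_pos_left hfac).1 ?_
  have h' : 0 ≤ ∑ i ∈ s, ∑ j ∈ s, a i * a j *
    (l.factorial * (Chebyshev.U ℝ l).eval ⟪x i, x j⟫) := by exact_mod_cast h
  refine h'.trans_eq ?_
  simp only [mul_sum]
  exact sum_congr rfl fun i _ ↦ sum_congr rfl fun j _ ↦ by ring

end Chebyshev

/-! ### Golden integers -/

open QuadraticAlgebra (omega)

local notation "ω" => (omega : QuadraticAlgebra ℤ 1 1)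

/-- The ring `ℤ[φ]`; its element `ω` satisfies `ω² = 1 + ω`. -/
abbrev GoldenInt := QuadraticAlgebra ℤ 1 1

namespace GoldenInt

/-- The real embedding of `ℤ[φ]` with `ω ↦ φ`. -/
noncomputable def toReal : GoldenInt →ₐ[ℤ] ℝ :=
  QuadraticAlgebra.lift ⟨φ, by rw [← sq, Real.goldenRatio_sq]; simp [add_comm]⟩

/-- The conjugate real embedding of `ℤ[φ]`, with `ω ↦ ψ`. -/
noncomputable def toRealConj : GoldenInt →ₐ[ℤ] ℝ :=
  QuadraticAlgebra.lift ⟨ψ, by rw [← sq, Real.goldenConj_sq]; simp [add_comm]⟩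

lemma toReal_apply (z : GoldenInt) : toReal z = z.re + z.im * φ := by
  simp [toReal, QuadraticAlgebra.lift]

lemma toRealConj_apply (z : GoldenInt) : toRealConj z = z.re + z.im * ψ := by
  simp [toRealConj, QuadraticAlgebra.lift]

lemma toReal_omega : toReal ω = φ := by simp [toReal_apply]

lemma toRealConj_omega : toRealConj ω = ψ := by simp [toRealConj_apply]

lemma toReal_mul_toRealConj (z : GoldenInt) : toReal z * toRealConj z = (z.norm : ℤ) := by
  rw [toReal_apply, toRealConj_apply, QuadraticAlgebra.norm_def]
  push_cast
  linear_combination (z.im : ℝ) ^ 2 * Real.goldenRatio_mul_goldenConj +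
    (z.re : ℝ) * z.im * Real.goldenRatio_add_goldenConj

lemma eq_zero_of_re_add_im_mul_eq_zero {z : GoldenInt} {u : ℝ} (hu : Irrational u)
    (h : z.re + z.im * u = 0) : z = 0 := by
  have him : z.im = 0 := by
    by_contra him
    exact ((hu.intCast_mul him).intCast_add z.re).ne_zero h
  ext
  · simpa [him] using h
  · exact him

lemma toReal_injective : Function.Injective toReal :=
  (injective_iff_map_eq_zero toReal).2 fun z hz ↦
    eq_zero_of_re_add_im_mul_eq_zero Real.goldenRatio_irrational (toReal_apply z ▸ hz)

lemma toRealConj_injective : Function.Injective toRealConj :=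
  (injective_iff_map_eq_zero toRealConj).2 fun z hz ↦
    eq_zero_of_re_add_im_mul_eq_zero Real.goldenConj_irrational (toRealConj_apply z ▸ hz)

/-- The norm of a nonzero golden integer is a nonzero integer. -/
lemma one_le_abs_toReal_mul_abs_toRealConj {z : GoldenInt} (hz : z ≠ 0) :
    1 ≤ |toReal z| * |toRealConj z| := by
  have hprod : toReal z * toRealConj z ≠ 0 :=
    mul_ne_zero ((map_ne_zero_iff _ toReal_injective).2 hz)
      ((map_ne_zero_iff _ toRealConj_injective).2 hz)
  rw [← abs_mul, toReal_mul_toRealConj] at *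
  exact_mod_cast Int.one_le_abs (by exact_mod_cast hprod)

end GoldenInt

open GoldenInt

lemma goldenRatio_mem_Ioo : φ ∈ Set.Ioo 1.618 1.6181 := by
  have h₀ : (0 : ℝ) < φ := Real.goldenRatio_pos
  have h₁ := Real.goldenRatio_sq
  constructor <;> nlinarith

/-- The golden integers all of whose conjugates lie in `[-2, 2]`: they are twice the possible inner
products of two vertices of the 600-cell. -/
def goldenValues : Finset GoldenInt := {2, ω, 1, ω - 1, 0, 1 - ω, -1, -ω, -2}

lemma mem_goldenValues_of_abs_le {z : GoldenInt} (h : |toReal z| ≤ 2) (h' : |toRealConj z| ≤ 2) :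
    z ∈ goldenValues := by
  obtain ⟨a, b⟩ := z
  obtain ⟨hφ, hφ'⟩ := goldenRatio_mem_Ioo
  rw [toReal_apply, abs_le] at h
  rw [toRealConj_apply, ← Real.one_sub_goldenConj, abs_le] at h'
  dsimp only at h h'
  have hb : -2 < b ∧ b < 2 := by
    rify
    constructor <;> nlinarith
  have ha : -5 < a ∧ a < 5 := by
    have hb' : (-2 : ℝ) < b ∧ (b : ℝ) < 2 := by exact_mod_cast hb
    rify
    constructor <;> linarith
  obtain ⟨⟨hb₁, hb₂⟩, ha₁, ha₂⟩ := hb, ha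
  interval_cases b <;> interval_cases a <;> first | decide | (exfalso; push_cast at h h'; linarith)

/-! ### Linear programming bounds -/

section LinearProgramming

/-- `F` is a combination of the polynomials `U 0, …, U n` with nonnegative coefficients, the
constant coefficient being `c₀`. -/
def HasNonnegChebyshevExpansion (F : ℝ → ℝ) (c₀ : ℝ) : Prop :=
  ∃ (n : ℕ) (c : ℕ → ℝ), (∀ l ∈ range (n + 1), 0 ≤ c l) ∧ c 0 = c₀ ∧
    ∀ t, F t = ∑ l ∈ range (n + 1), c l * (Chebyshev.U ℝ l).eval t

lemma HasNonnegChebyshevExpansion.mul_card_sq_le {F : ℝ → ℝ} {c₀ : ℝ}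
    (hF : HasNonnegChebyshevExpansion F c₀) {ι : Type*} (s : Finset ι)
    {x : ι → EuclideanSpace ℝ (Fin 4)} (hx : ∀ i, ‖x i‖ = 1) :
    c₀ * #s ^ 2 ≤ ∑ i ∈ s, ∑ j ∈ s, F ⟪x i, x j⟫ := by
  obtain ⟨n, c, hc, rfl, hF⟩ := hF
  have hU (l : ℕ) : 0 ≤ ∑ i ∈ s, ∑ j ∈ s, (Chebyshev.U ℝ l).eval ⟪x i, x j⟫ := by
    simpa using sum_mul_eval_U_inner_nonneg s 1 hx l
  calc c 0 * #s ^ 2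
      = c 0 * ∑ i ∈ s, ∑ j ∈ s, (Chebyshev.U ℝ (0 : ℕ)).eval ⟪x i, x j⟫ := by simp [sq]
    _ ≤ ∑ l ∈ range (n + 1), c l * ∑ i ∈ s, ∑ j ∈ s, (Chebyshev.U ℝ l).eval ⟪x i, x j⟫ :=
        single_le_sum (f := fun l : ℕ ↦ c l * ∑ i ∈ s, ∑ j ∈ s, (Chebyshev.U ℝ l).eval ⟪x i, x j⟫)
          (fun l hl ↦ mul_nonneg (hc l hl) (hU l)) (mem_range.2 n.succ_pos)
    _ = ∑ i ∈ s, ∑ j ∈ s, F ⟪x i, x j⟫ := by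
        simp only [hF, mul_sum]
        rw [sum_comm]
        exact sum_congr rfl fun i _ ↦ sum_comm

lemma eval_U_eq_sum_antidiagonal {R : Type*} [CommRing R] (t : R) (n : ℕ) :
    (Chebyshev.U R n).eval t =
      ∑ p ∈ antidiagonal n, (-1) ^ p.2 * p.1.choose p.2 * (2 * t) ^ (p.1 - p.2) := by
  have pascal (a b : ℕ) : (-1) ^ (b + 1) * ((a + 1).choose (b + 1) : R) * (2 * t) ^ (a - b) =
      2 * t * ((-1) ^ (b + 1) * a.choose (b + 1) * (2 * t) ^ (a - (b + 1))) -
        (-1) ^ b * a.choose b * (2 * t) ^ (a - b) := by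
    rw [Nat.choose_succ_succ]
    obtain h | h := lt_or_ge a (b + 1)
    · rw [Nat.choose_eq_zero_of_lt h]
      push_cast
      ring
    · obtain ⟨c, rfl⟩ := Nat.exists_eq_add_of_le h
      rw [Nat.add_sub_cancel_left, show b + 1 + c - b = c + 1 by omega]
      push_cast
      ring
  induction n using Nat.twoStepInduction with
  | zero => simp
  | one => simp [Nat.antidiagonal_succ]
  | more n ih₀ ih₁ =>
    have hU := congrArg (eval t) (Chebyshev.U_add_two R n)
    simp only [eval_sub, eval_mul, eval_ofNat, eval_X] at hU
    push_cast at ih₁ ⊢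
    rw [hU, ih₀, ih₁, Finset.Nat.antidiagonal_succ_succ', Finset.Nat.antidiagonal_succ']
    simp [pascal, mul_sum, sum_sub_distrib, mul_add]
    ring

lemma hasNonnegChebyshevExpansion_neighbourBound : HasNonnegChebyshevExpansion
    (fun t ↦ t ^ 2 * (t - 1 / 2) * (t + 7 / 10) ^ 2) (41 / 800) := by
  refine ⟨5, fun l ↦ [41, 83, 86, 79, 45, 25].getD l 0 / 800, ?_, by simp, fun t ↦ ?_⟩
  · intro l hl
    have := mem_range.1 hl
    interval_cases l <;> norm_num
  · simp [sum_range_succ, eval_U_eq_sum_antidiagonal,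
      Finset.Nat.sum_antidiagonal_eq_sum_range_succ_mk, Nat.choose]
    ring

/-- Twice the possible inner products, other than `±1` and `φ / 2`, of two vertices of the
600-cell. -/
def lowerGoldenValues : Finset GoldenInt := {1, ω - 1, 0, 1 - ω, -1, -ω}

lemma toReal_mem_Icc_of_mem_lowerGoldenValues {z : GoldenInt} (hz : z ∈ lowerGoldenValues) :
    toReal z ∈ Set.Icc (-2) 1 := by
  obtain ⟨hφ, hφ'⟩ := goldenRatio_mem_Ioo
  simp only [lowerGoldenValues, mem_insert, mem_singleton] at hz
  rcases hz with rfl | rfl | rfl | rfl | rfl | rfl <;>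
    simp only [map_neg, map_sub, map_zero, map_one, toReal_omega] <;> constructor <;> linarith

/-- The last factor of `cellCofactor`: positive on `[-1, 1]`, it makes the Chebyshev coefficients
nonnegative. -/
noncomputable def cubicFactor (t : ℝ) : ℝ :=
  (1 - t ^ 2) * (53 / 50 - t) + (26 + 83 * φ) / 3000

lemma cubicFactor_mem_Icc {t : ℝ} (ht : t ∈ Set.Icc (-1) 1) : cubicFactor t ∈ Set.Icc 0.05 3 := by
  obtain ⟨⟨hφ, hφ'⟩, ht₁, ht₂⟩ := goldenRatio_mem_Ioo, ht
  have h₁ : 0 ≤ 1 - t ^ 2 := by nlinarith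
  rw [cubicFactor]
  constructor
  · nlinarith
  · nlinarith

/-- The cofactor of `t - φ / 2` in the polynomial which is extremal for 120 points on the
three-sphere: it vanishes at the inner products less than `φ / 2` of vertices of the 600-cell. -/
noncomputable def cellCofactor (t : ℝ) : ℝ :=
  (t + 1) * (∏ z ∈ lowerGoldenValues, (t - toReal z / 2) ^ 2) * cubicFactor t

lemma cellCofactor_eq (t : ℝ) : cellCofactor t =
    (t + 1) * ((t - 1 / 2) ^ 2 * (t - (φ - 1) / 2) ^ 2 * t ^ 2 * (t + (φ - 1) / 2) ^ 2 *
      (t + 1 / 2) ^ 2 * (t + φ / 2) ^ 2) *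
    ((1 - t ^ 2) * (53 / 50 - t) + (26 + 83 * φ) / 3000) := by
  rw [cellCofactor, lowerGoldenValues, cubicFactor]
  congr 2
  rw [prod_insert (by decide), prod_insert (by decide), prod_insert (by decide),
    prod_insert (by decide), prod_insert (by decide), prod_singleton]
  simp only [map_neg, map_sub, map_zero, map_one, toReal_omega]
  ring

lemma sub_mul_cellCofactor_eq (t : ℝ) : (t - φ / 2) * cellCofactor t =
    (t + 1) * t ^ 2 * (t ^ 2 - 1 / 4) ^ 2 * (t ^ 4 - 3 / 4 * t ^ 2 + 1 / 16) *
      ((t ^ 3 - t / 2 + 1 / 8 + (t ^ 2 / 2 + t / 4 - 1 / 8) * φ) *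
        ((1 - t ^ 2) * (53 / 50 - t) + 26 / 3000) +
        ((t ^ 2 / 2 + t / 4 - 1 / 8) + (t ^ 3 + t ^ 2 / 2 - t / 4) * φ) * (83 / 3000)) := by
  have hφ := Real.goldenRatio_sq
  rw [cellCofactor_eq]
  generalize φ = g at hφ ⊢
  have hquartic : (t - g / 2) * (t + g / 2) * ((t - (g - 1) / 2) * (t + (g - 1) / 2)) =
      t ^ 4 - 3 / 4 * t ^ 2 + 1 / 16 := by
    linear_combination (-t ^ 2 / 2 + g ^ 2 / 16 - g / 16 + 1 / 16) * hφ
  have hcubic : (t + g / 2) * ((t - (g - 1) / 2) * (t + (g - 1) / 2)) =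
      t ^ 3 - t / 2 + 1 / 8 + (t ^ 2 / 2 + t / 4 - 1 / 8) * g := by
    linear_combination (-t / 4 - g / 8 + 1 / 8) * hφ
  rw [← hquartic]
  linear_combination (t + 1) * t ^ 2 * (t ^ 2 - 1 / 4) ^ 2 *
    ((t - g / 2) * (t + g / 2) * ((t - (g - 1) / 2) * (t + (g - 1) / 2))) *
    (((1 - t ^ 2) * (53 / 50 - t) + (26 + 83 * g) / 3000) * hcubic +
      83 / 3000 * (t ^ 2 / 2 + t / 4 - 1 / 8) * hφ)

lemma hasNonnegChebyshevExpansion_cell : HasNonnegChebyshevExpansion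
    (fun t ↦ (t - φ / 2) * cellCofactor t) ((3270 + 5760 * φ) / 49152000) := by
  refine ⟨17, fun l ↦
    ([3270, 7765, 8941, 11955, 11653, 11115, 8986, 6720, 3918, 1690, 648, -670, 0, -555, 221, 285,
      -45, 375].getD l 0 + [5760, 10690, 15683, 18250, 19419, 18300, 15308, 11140, 7034, 3630,
      1274, 450, 0, 380, 323, 330, 375, 0].getD l 0 * φ) / 49152000, ?_, by simp, fun t ↦ ?_⟩
  · obtain ⟨hφ, -⟩ := goldenRatio_mem_Ioo
    intro l hl
    have := mem_range.1 hl
    interval_cases l <;> norm_num <;> linarith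
  · simp only [sub_mul_cellCofactor_eq]
    generalize φ = g
    simp [sum_range_succ, eval_U_eq_sum_antidiagonal,
      Finset.Nat.sum_antidiagonal_eq_sum_range_succ_mk, Nat.choose]
    ring

lemma cellCofactor_mem_Icc {t : ℝ} (ht : t ∈ Set.Icc (-1) 1) :
    cellCofactor t ∈ Set.Icc 0 25000 := by
  obtain ⟨⟨ht₁, ht₂⟩, hq₁, hq₂⟩ := ht, cubicFactor_mem_Icc ht
  have hprod : ∏ z ∈ lowerGoldenValues, (t - toReal z / 2) ^ 2 ≤ 4 ^ #lowerGoldenValues := by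
    rw [← prod_const]
    refine prod_le_prod (fun _ _ ↦ sq_nonneg _) fun z hz ↦ ?_
    obtain ⟨hz₁, hz₂⟩ := toReal_mem_Icc_of_mem_lowerGoldenValues hz
    nlinarith
  have hcard : #lowerGoldenValues = 6 := by decide
  have hprod₀ : 0 ≤ ∏ z ∈ lowerGoldenValues, (t - toReal z / 2) ^ 2 :=
    prod_nonneg fun _ _ ↦ sq_nonneg _
  constructor
  · exact mul_nonneg (mul_nonneg (by linarith) hprod₀) (by linarith)
  · calc cellCofactor t ≤ 2 * 4 ^ 6 * 3 := by
          rw [hcard] at hprod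
          unfold cellCofactor
          gcongr
          linarith
      _ ≤ 25000 := by norm_num

lemma le_cellCofactor {t : ℝ} (ht : t ∈ Set.Icc 0.76 1) : 1 / 10 ^ 9 ≤ cellCofactor t := by
  obtain ⟨ht₁, ht₂⟩ := ht
  obtain ⟨hq, -⟩ := cubicFactor_mem_Icc (t := t) ⟨by linarith, ht₂⟩
  have hprod : (0.06 : ℝ) ^ #lowerGoldenValues ≤
      ∏ z ∈ lowerGoldenValues, (t - toReal z / 2) ^ 2 := by
    rw [← prod_const]
    refine prod_le_prod (fun _ _ ↦ by norm_num) fun z hz ↦ ?_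
    obtain ⟨-, hz₂⟩ := toReal_mem_Icc_of_mem_lowerGoldenValues hz
    nlinarith
  calc (1 / 10 ^ 9 : ℝ) ≤ 1 * 0.06 ^ #lowerGoldenValues * 0.05 := by
        rw [show #lowerGoldenValues = 6 by decide]; norm_num
    _ ≤ cellCofactor t := by
        unfold cellCofactor
        gcongr
        linarith

lemma prod_goldenValues_sq_le {t : ℝ} (ht₁ : -1 ≤ t) (ht₂ : t ≤ φ / 2) :
    ∏ z ∈ goldenValues.erase 2, (t - toReal z / 2) ^ 2 ≤ 80 * ((φ / 2 - t) * cellCofactor t) := by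
  obtain ⟨hφ, hφ'⟩ := goldenRatio_mem_Ioo
  obtain ⟨hq, -⟩ := cubicFactor_mem_Icc (t := t) ⟨ht₁, by linarith⟩
  have hsplit : goldenValues.erase 2 = insert ω (insert (-2) lowerGoldenValues) := by decide
  have htop : (t - φ / 2) ^ 2 ≤ 2 * (φ / 2 - t) := by nlinarith
  have hbot : (t + 1) ^ 2 ≤ 2 * (t + 1) := by nlinarith
  have hprod₀ : 0 ≤ ∏ z ∈ lowerGoldenValues, (t - toReal z / 2) ^ 2 :=
    prod_nonneg fun _ _ ↦ sq_nonneg _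
  rw [hsplit, prod_insert (by decide), prod_insert (by decide)]
  simp only [map_neg, map_ofNat, toReal_omega, neg_div, div_self (two_ne_zero' ℝ), sub_neg_eq_add]
  calc (t - φ / 2) ^ 2 * ((t + 1) ^ 2 * ∏ z ∈ lowerGoldenValues, (t - toReal z / 2) ^ 2)
      ≤ 2 * (φ / 2 - t) * (2 * (t + 1) * ∏ z ∈ lowerGoldenValues, (t - toReal z / 2) ^ 2) := by
        gcongr
    _ = 80 * ((φ / 2 - t) * ((t + 1) * (∏ z ∈ lowerGoldenValues, (t - toReal z / 2) ^ 2) *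
          0.05)) := by ring
    _ ≤ 80 * ((φ / 2 - t) * cellCofactor t) := by
        unfold cellCofactor
        gcongr
        exact mul_nonneg (by linarith) hprod₀

variable {ι : Type*} [Fintype ι] {x : ι → EuclideanSpace ℝ (Fin 4)} {ε : ℝ}

lemma HasNonnegChebyshevExpansion.sub_le {F : ℝ → ℝ} {c₀ η : ℝ}
    (hF : HasNonnegChebyshevExpansion F c₀) (hx : ∀ i, ‖x i‖ = 1)
    (hη : ∀ i j, i ≠ j → F ⟪x i, x j⟫ ≤ η) {i j : ι} (hij : i ≠ j) :
    η - F ⟪x i, x j⟫ ≤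
      Fintype.card ι * F 1 + (Fintype.card ι ^ 2 - Fintype.card ι) * η -
        c₀ * Fintype.card ι ^ 2 := by
  classical
  have hsum := hF.mul_card_sq_le univ hx
  have hnonneg (p : ι × ι) :
      0 ≤ η + (if p.1 = p.2 then F 1 - η else 0) - F ⟪x p.1, x p.2⟫ := by
    split_ifs with h
    · simp [h, hx]
    · linarith [hη _ _ h]
  have hle := single_le_sum (fun p _ ↦ hnonneg p) (mem_univ (i, j))
  simp only [hij, if_false, add_zero] at hle
  refine hle.trans ?_
  rw [Fintype.sum_prod_type]
  simp only [sum_sub_distrib, sum_add_distrib, sum_const, sum_ite_eq, mem_univ, if_true,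
    card_univ, nsmul_eq_mul] at hsum ⊢
  linarith

lemma one_sub_mul_cellCofactor_one :
    (1 - φ / 2) * cellCofactor 1 = 120 * ((3270 + 5760 * φ) / 49152000) := by
  rw [sub_mul_cellCofactor_eq]
  generalize φ = g
  ring

lemma sub_mul_cellCofactor_le {t : ℝ} (hε : 0 ≤ ε) (ht : t ∈ Set.Icc (-1) 1)
    (htε : t ≤ φ / 2 + 2 * ε) : (t - φ / 2) * cellCofactor t ≤ 50000 * ε := by
  obtain ⟨h₀, h₁⟩ := cellCofactor_mem_Icc ht
  calc (t - φ / 2) * cellCofactor t ≤ 2 * ε * 25000 := by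
        gcongr
        linarith
    _ = 50000 * ε := by ring

lemma inner_mem_Icc_of_norm_eq_one {E : Type*} [NormedAddCommGroup E] [InnerProductSpace ℝ E]
    {u v : E} (hu : ‖u‖ = 1) (hv : ‖v‖ = 1) : ⟪u, v⟫ ∈ Set.Icc (-1) 1 := by
  simpa [hu, hv, abs_le] using abs_real_inner_le_norm u v

lemma sub_mul_cellCofactor_inner_le (hε : 0 ≤ ε) (hx : ∀ i, ‖x i‖ = 1)
    (hinner : ∀ i j, i ≠ j → ⟪x i, x j⟫ ≤ φ / 2 + 2 * ε) {i j : ι} (hij : i ≠ j) :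
    50000 * ε - (⟪x i, x j⟫ - φ / 2) * cellCofactor ⟪x i, x j⟫ ≤
      Fintype.card ι * (120 - Fintype.card ι) * ((3270 + 5760 * φ) / 49152000) +
        Fintype.card ι * (Fintype.card ι - 1) * (50000 * ε) := by
  have h := hasNonnegChebyshevExpansion_cell.sub_le hx (fun i j hij ↦ sub_mul_cellCofactor_le hε
    (inner_mem_Icc_of_norm_eq_one (hx i) (hx j)) (hinner i j hij)) hij
  rw [one_sub_mul_cellCofactor_one] at h
  refine h.trans_eq ?_
  generalize φ = g
  ring

lemma card_eq_of_forall_inner_le (hε : 0 ≤ ε) (hε' : ε < 1 / 10 ^ 14) (hx : ∀ i, ‖x i‖ = 1)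
    (hinner : ∀ i j, i ≠ j → ⟪x i, x j⟫ ≤ φ / 2 + 2 * ε) (hcard : 120 ≤ Fintype.card ι) :
    Fintype.card ι = 120 := by
  refine hcard.antisymm' (le_of_not_gt fun hgt ↦ ?_)
  obtain ⟨i, j, hij⟩ := Fintype.exists_pair_of_one_lt_card (hcard.trans_lt' (by norm_num))
  have h := sub_mul_cellCofactor_inner_le hε hx hinner hij
  have hF := sub_mul_cellCofactor_le hε (inner_mem_Icc_of_norm_eq_one (hx i) (hx j))
    (hinner i j hij)
  have hk : (121 : ℝ) ≤ Fintype.card ι := by exact_mod_cast hgt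
  have hc : 1 / 10 ^ 4 ≤ (3270 + 5760 * φ) / 49152000 := by linarith [goldenRatio_mem_Ioo.1]
  generalize (Fintype.card ι : ℝ) = k at h hk
  have hneg : k * ((120 - k) * ((3270 + 5760 * φ) / 49152000) + (k - 1) * (50000 * ε)) < 0 := by
    refine mul_neg_of_pos_of_neg (by linarith) ?_
    calc (120 - k) * ((3270 + 5760 * φ) / 49152000) + (k - 1) * (50000 * ε)
        ≤ (120 - k) * (1 / 10 ^ 4) + (120 * (k - 120)) * (50000 * (1 / 10 ^ 14)) := by
          refine add_le_add (mul_le_mul_of_nonpos_left hc (by linarith)) ?_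
          gcongr <;> linarith
      _ < 0 := by linarith
  linarith

lemma mul_cellCofactor_inner_le (hε : 0 ≤ ε) (hx : ∀ i, ‖x i‖ = 1)
    (hinner : ∀ i j, i ≠ j → ⟪x i, x j⟫ ≤ φ / 2 + 2 * ε) (hcard : Fintype.card ι = 120)
    {i j : ι} (hij : i ≠ j) :
    (φ / 2 - ⟪x i, x j⟫) * cellCofactor ⟪x i, x j⟫ ≤ 7.2 * 10 ^ 8 * ε := by
  have h := sub_mul_cellCofactor_inner_le hε hx hinner hij
  rw [hcard] at h
  norm_num at h ⊢
  linarith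

lemma abs_inner_sub_goldenRatio_div_two_le (hε : 0 ≤ ε) (hx : ∀ i, ‖x i‖ = 1)
    (hinner : ∀ i j, i ≠ j → ⟪x i, x j⟫ ≤ φ / 2 + 2 * ε) (hcard : Fintype.card ι = 120)
    {i j : ι} (hij : i ≠ j) (hadj : 0.76 ≤ ⟪x i, x j⟫) :
    |⟪x i, x j⟫ - φ / 2| ≤ 10 ^ 18 * ε := by
  have hF := mul_cellCofactor_inner_le hε hx hinner hcard hij
  have hlow := le_cellCofactor ⟨hadj, (inner_mem_Icc_of_norm_eq_one (hx i) (hx j)).2⟩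
  rw [abs_le]
  refine ⟨?_, by linarith [hinner i j hij]⟩
  obtain hle | hlt := le_total (φ / 2) ⟪x i, x j⟫
  · linarith
  · have : (φ / 2 - ⟪x i, x j⟫) * (1 / 10 ^ 9) ≤ 7.2 * 10 ^ 8 * ε := hF.trans' (by gcongr)
    linarith

lemma exists_goldenValues_abs_inner_sub_le (hε : 0 ≤ ε) (hε' : ε ≤ 1 / 10 ^ 200)
    (hx : ∀ i, ‖x i‖ = 1) (hinner : ∀ i j, i ≠ j → ⟪x i, x j⟫ ≤ φ / 2 + 2 * ε)
    (hcard : Fintype.card ι = 120) {i j : ι} (hij : i ≠ j) :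
    ∃ z ∈ goldenValues.erase 2, |⟪x i, x j⟫ - toReal z / 2| ≤ 1 / 10 ^ 6 := by
  obtain hlt | hle := lt_or_ge (φ / 2) ⟪x i, x j⟫
  · refine ⟨ω, by decide, ?_⟩
    rw [toReal_omega, abs_of_pos (sub_pos.2 hlt)]
    linarith [hinner i j hij]
  · by_contra! hfar
    have hprod := prod_goldenValues_sq_le (inner_mem_Icc_of_norm_eq_one (hx i) (hx j)).1 hle
    have hF := mul_cellCofactor_inner_le hε hx hinner hcard hij
    have hlow : (1 / 10 ^ 12 : ℝ) ^ #(goldenValues.erase 2) ≤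
        ∏ z ∈ goldenValues.erase 2, (⟪x i, x j⟫ - toReal z / 2) ^ 2 := by
      rw [← prod_const]
      refine prod_le_prod (fun _ _ ↦ by norm_num) fun z hz ↦ ?_
      calc (1 / 10 ^ 12 : ℝ) = (1 / 10 ^ 6) ^ 2 := by norm_num
        _ ≤ |⟪x i, x j⟫ - toReal z / 2| ^ 2 := by gcongr; exact (hfar z hz).le
        _ = _ := sq_abs _
    rw [show #(goldenValues.erase 2) = 8 by decide] at hlow
    linarith

end LinearProgramming

/-! ### The coordinate form and the roots -/

/-- Twice the inner product of two vectors with the given coordinates, for the coordinates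
`ρ i = 2 ⟪v, b i⟫` with respect to the vertices `b 0, …, b 3` of a regular tetrahedron with edge
cosine `u / 2`, when `u² = u + 1`. -/
def goldenForm {R : Type*} [CommRing R] (u : R) (ρ σ : Fin 4 → R) : R :=
  (1 + u) * (ρ 0 * σ 0 + ρ 1 * σ 1 + ρ 2 * σ 2 + ρ 3 * σ 3) -
    (u - 1) * ((ρ 0 + ρ 1 + ρ 2 + ρ 3) * (σ 0 + σ 1 + σ 2 + σ 3))

lemma map_goldenForm {R S : Type*} [CommRing R] [CommRing S] (f : R →+* S) (u : R)
    (ρ σ : Fin 4 → R) : f (goldenForm u ρ σ) = goldenForm (f u) (f ∘ ρ) (f ∘ σ) := by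
  simp [goldenForm]

lemma toReal_goldenForm (ρ σ : Fin 4 → GoldenInt) :
    toReal (goldenForm ω ρ σ) = goldenForm φ (toReal ∘ ρ) (toReal ∘ σ) := by
  simpa [toReal_omega] using map_goldenForm (toReal : GoldenInt →+* ℝ) ω ρ σ

lemma toRealConj_goldenForm (ρ σ : Fin 4 → GoldenInt) :
    toRealConj (goldenForm ω ρ σ) = goldenForm ψ (toRealConj ∘ ρ) (toRealConj ∘ σ) := by
  simpa [toRealConj_omega] using map_goldenForm (toRealConj : GoldenInt →+* ℝ) ω ρ σ

lemma mul_sum_sq_le_goldenForm_self {u : ℝ} (hu : 1 ≤ u) (ρ : Fin 4 → ℝ) :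
    (5 - 3 * u) * ∑ i, ρ i ^ 2 ≤ goldenForm u ρ ρ := by
  have hcs : (∑ i, ρ i) ^ 2 ≤ 4 * ∑ i, ρ i ^ 2 := by
    simpa using sq_sum_le_card_mul_sum_sq (s := univ) (f := ρ)
  simp only [goldenForm, Fin.sum_univ_four] at *
  nlinarith

lemma goldenForm_self_nonneg_of_le_one {u : ℝ} (hu : -1 ≤ u) (hu' : u ≤ 1) (ρ : Fin 4 → ℝ) :
    0 ≤ goldenForm u ρ ρ := by
  have h₁ := mul_nonneg (by linarith : 0 ≤ 1 + u)
    (by positivity : 0 ≤ ρ 0 ^ 2 + ρ 1 ^ 2 + ρ 2 ^ 2 + ρ 3 ^ 2)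
  have h₂ := mul_nonneg (by linarith : 0 ≤ 1 - u) (sq_nonneg (ρ 0 + ρ 1 + ρ 2 + ρ 3))
  unfold goldenForm
  linarith

lemma abs_goldenForm_le_two {u : ℝ} (hu : ∀ ρ : Fin 4 → ℝ, 0 ≤ goldenForm u ρ ρ)
    {ρ σ : Fin 4 → ℝ} (hρ : goldenForm u ρ ρ = 2) (hσ : goldenForm u σ σ = 2) :
    |goldenForm u ρ σ| ≤ 2 := by
  have hadd := hu (ρ + σ)
  have hsub := hu (ρ - σ)
  simp only [goldenForm, Pi.add_apply, Pi.sub_apply] at *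
  rw [abs_le]
  constructor <;> linarith

lemma goldenForm_goldenRatio_self_nonneg (ρ : Fin 4 → ℝ) : 0 ≤ goldenForm φ ρ ρ := by
  obtain ⟨hφ, hφ'⟩ := goldenRatio_mem_Ioo
  refine le_trans ?_ (mul_sum_sq_le_goldenForm_self (by linarith) ρ)
  exact mul_nonneg (by linarith) (sum_nonneg fun i _ ↦ sq_nonneg _)

lemma goldenForm_goldenConj_self_nonneg (ρ : Fin 4 → ℝ) : 0 ≤ goldenForm ψ ρ ρ :=
  goldenForm_self_nonneg_of_le_one Real.neg_one_lt_goldenConj.le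
    (Real.goldenConj_neg.le.trans zero_le_one) ρ

/-- The codes of the vertices of a 600-cell: doubled inner products with the four vertices of one
of its cells. -/
def goldenRoots : Finset (Fin 4 → GoldenInt) :=
  (Fintype.piFinset fun _ ↦ goldenValues).filter fun ρ ↦ goldenForm ω ρ ρ = 2

lemma mem_goldenRoots {ρ : Fin 4 → GoldenInt} :
    ρ ∈ goldenRoots ↔ (∀ i, ρ i ∈ goldenValues) ∧ goldenForm ω ρ ρ = 2 := by
  simp [goldenRoots]

lemma toReal_goldenForm_self {ρ : Fin 4 → GoldenInt} (hρ : ρ ∈ goldenRoots) :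
    goldenForm φ (toReal ∘ ρ) (toReal ∘ ρ) = 2 := by
  rw [← toReal_goldenForm, (mem_goldenRoots.1 hρ).2, map_ofNat]

lemma toRealConj_goldenForm_self {ρ : Fin 4 → GoldenInt} (hρ : ρ ∈ goldenRoots) :
    goldenForm ψ (toRealConj ∘ ρ) (toRealConj ∘ ρ) = 2 := by
  rw [← toRealConj_goldenForm, (mem_goldenRoots.1 hρ).2, map_ofNat]

lemma goldenForm_mem_goldenValues {ρ σ : Fin 4 → GoldenInt} (hρ : ρ ∈ goldenRoots)
    (hσ : σ ∈ goldenRoots) : goldenForm ω ρ σ ∈ goldenValues :=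
  mem_goldenValues_of_abs_le
    (toReal_goldenForm ρ σ ▸ abs_goldenForm_le_two goldenForm_goldenRatio_self_nonneg
      (toReal_goldenForm_self hρ) (toReal_goldenForm_self hσ))
    (toRealConj_goldenForm ρ σ ▸ abs_goldenForm_le_two goldenForm_goldenConj_self_nonneg
      (toRealConj_goldenForm_self hρ) (toRealConj_goldenForm_self hσ))

lemma eq_of_goldenForm_eq_two {ρ σ : Fin 4 → GoldenInt} (hρ : ρ ∈ goldenRoots)
    (hσ : σ ∈ goldenRoots) (h : goldenForm ω ρ σ = 2) : ρ = σ := by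
  obtain ⟨hφ, hφ'⟩ := goldenRatio_mem_Ioo
  have hρσ : goldenForm φ (toReal ∘ ρ) (toReal ∘ σ) = 2 := by
    rw [← toReal_goldenForm, h, map_ofNat]
  have hsub : goldenForm φ (toReal ∘ ρ - toReal ∘ σ) (toReal ∘ ρ - toReal ∘ σ) = 0 := by
    have h₁ := toReal_goldenForm_self hρ
    have h₂ := toReal_goldenForm_self hσ
    simp only [goldenForm, Pi.sub_apply] at *
    linarith
  have hsum : ∑ i, (toReal ∘ ρ - toReal ∘ σ) i ^ 2 ≤ 0 := by
    have := mul_sum_sq_le_goldenForm_self (by linarith : 1 ≤ φ) (toReal ∘ ρ - toReal ∘ σ)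
    nlinarith
  funext i
  have hi := (sum_eq_zero_iff_of_nonneg fun i _ ↦ sq_nonneg _).1
    (hsum.antisymm (sum_nonneg fun i _ ↦ sq_nonneg _)) i (mem_univ i)
  exact toReal_injective (sub_eq_zero.1 (pow_eq_zero_iff two_ne_zero |>.1 hi))

lemma toReal_le_goldenRatio {z : GoldenInt} (hz : z ∈ goldenValues) (hz2 : z ≠ 2) :
    toReal z ≤ φ := by
  obtain ⟨hφ, hφ'⟩ := goldenRatio_mem_Ioo
  simp only [goldenValues, mem_insert, mem_singleton] at hz
  rcases hz with rfl | rfl | rfl | rfl | rfl | rfl | rfl | rfl | rfl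
  all_goals
    first
    | exact absurd rfl hz2
    | simp only [map_sub, map_neg, map_zero, map_one, map_ofNat, toReal_omega]; linarith

lemma goldenForm_le_goldenRatio {ρ σ : Fin 4 → GoldenInt} (hρ : ρ ∈ goldenRoots)
    (hσ : σ ∈ goldenRoots) (hne : ρ ≠ σ) : goldenForm φ (toReal ∘ ρ) (toReal ∘ σ) ≤ φ := by
  rw [← toReal_goldenForm]
  exact toReal_le_goldenRatio (goldenForm_mem_goldenValues hρ hσ)
    fun h ↦ hne (eq_of_goldenForm_eq_two hρ hσ h)

lemma abs_toRealConj_le_two {z : GoldenInt} (hz : z ∈ goldenValues) : |toRealConj z| ≤ 2 := by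
  obtain ⟨hφ, hφ'⟩ := goldenRatio_mem_Ioo
  have hψ := Real.one_sub_goldenConj
  rw [abs_le]
  simp only [goldenValues, mem_insert, mem_singleton] at hz
  rcases hz with rfl | rfl | rfl | rfl | rfl | rfl | rfl | rfl | rfl
  all_goals
    simp only [map_sub, map_neg, map_zero, map_one, map_ofNat, toRealConj_omega]
    constructor <;> linarith

lemma goldenForm_goldenConj_self_le {ρ : Fin 4 → ℝ} (hρ : ∀ i, |ρ i| ≤ 2) :
    goldenForm ψ ρ ρ ≤ 113 := by
  obtain ⟨hφ, hφ'⟩ := goldenRatio_mem_Ioo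
  have hψ := Real.one_sub_goldenConj
  have hsq (i) : ρ i ^ 2 ≤ 4 := by nlinarith [sq_abs (ρ i), abs_nonneg (ρ i), hρ i]
  have hsum : (ρ 0 + ρ 1 + ρ 2 + ρ 3) ^ 2 ≤ 4 * (ρ 0 ^ 2 + ρ 1 ^ 2 + ρ 2 ^ 2 + ρ 3 ^ 2) := by
    simpa [Fin.sum_univ_four] using sq_sum_le_card_mul_sum_sq (s := univ) (f := ρ)
  have h₁ := mul_le_mul_of_nonneg_left hsum (by linarith : 0 ≤ 1 - ψ)
  unfold goldenForm
  nlinarith [hsq 0, hsq 1, hsq 2, hsq 3]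

/-- Gap principle: the conjugate of `goldenForm ω ρ ρ - 2` is bounded, so that this golden integer
vanishes as soon as it is small. -/
lemma mem_goldenRoots_of_abs_sub_two_lt {ρ : Fin 4 → GoldenInt} (hρ : ∀ i, ρ i ∈ goldenValues)
    (h : |goldenForm φ (toReal ∘ ρ) (toReal ∘ ρ) - 2| < 1 / 113) : ρ ∈ goldenRoots := by
  refine mem_goldenRoots.2 ⟨hρ, sub_eq_zero.1 ?_⟩
  by_contra hne
  have hgap := one_le_abs_toReal_mul_abs_toRealConj hne
  rw [map_sub, map_sub, map_ofNat, map_ofNat, toReal_goldenForm, toRealConj_goldenForm] at hgap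
  have hconj : |goldenForm ψ (toRealConj ∘ ρ) (toRealConj ∘ ρ) - 2| ≤ 113 := by
    have h₀ := goldenForm_goldenConj_self_nonneg (toRealConj ∘ ρ)
    have h₁ := goldenForm_goldenConj_self_le (ρ := toRealConj ∘ ρ)
      fun i ↦ abs_toRealConj_le_two (hρ i)
    rw [abs_le]
    constructor <;> linarith
  nlinarith [abs_nonneg (goldenForm φ (toReal ∘ ρ) (toReal ∘ ρ) - 2)]

/-- The code of the `m`-th vertex of the tetrahedron defining the coordinates. -/
def baseCode (m : Fin 4) : Fin 4 → GoldenInt := fun i ↦ if i = m then 2 else ω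

/-- A discrete measure of the distance from the base tetrahedron, `0` on its vertices. -/
def rank (ρ : Fin 4 → GoldenInt) : ℕ :=
  (8 - ((ρ 0 + ρ 1 + ρ 2 + ρ 3).re + 2 * (ρ 0 + ρ 1 + ρ 2 + ρ 3).im)).toNat

set_option maxRecDepth 10000 in
lemma card_goldenRoots : #goldenRoots = 120 := by decide +kernel

set_option maxRecDepth 10000 in
/-- Every vertex of the 600-cell outside the base tetrahedron completes a cell whose other vertices
are closer to that tetrahedron. -/
lemma exists_cell_of_mem_goldenRoots :
    ∀ ρ ∈ goldenRoots, rank ρ ≤ 16 ∧ ((∃ m, ρ = baseCode m) ∨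
      ∃ p ∈ goldenRoots, (rank p < rank ρ ∧ goldenForm ω ρ p = ω) ∧
      ∃ q ∈ goldenRoots, (rank q < rank ρ ∧ goldenForm ω ρ q = ω ∧ goldenForm ω p q = ω) ∧
      ∃ r ∈ goldenRoots, (rank r < rank ρ ∧ goldenForm ω ρ r = ω ∧
        goldenForm ω p r = ω ∧ goldenForm ω q r = ω)) := by
  decide +kernel

/-! ### Equiangular frames -/

section Equiangular

variable {ι E : Type*} [NormedAddCommGroup E] [InnerProductSpace ℝ E]

lemma norm_sum_smul_sq_eq_sum_inner [Fintype ι] (c : ι → ℝ) (v : ι → E) :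
    ‖∑ i, c i • v i‖ ^ 2 = ∑ i, ∑ j, c i * c j * ⟪v i, v j⟫ := by
  rw [← real_inner_self_eq_norm_sq, sum_inner]
  simp only [inner_sum, real_inner_smul_left, real_inner_smul_right]
  exact sum_congr rfl fun i _ ↦ sum_congr rfl fun j _ ↦ by ring

/-- A family of unit vectors with pairwise inner products `α`. -/
structure IsEquiangular (α : ℝ) (b : ι → E) : Prop where
  norm_eq : ∀ i, ‖b i‖ = 1
  inner_eq : ∀ i j, i ≠ j → ⟪b i, b j⟫ = α

namespace IsEquiangular

variable [Fintype ι] {α : ℝ} {b : ι → E}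

lemma inner_sum_smul (hb : IsEquiangular α b) (c : ι → ℝ) (j : ι) :
    ⟪∑ i, c i • b i, b j⟫ = (1 - α) * c j + α * ∑ i, c i := by
  classical
  have h (i) : ⟪b i, b j⟫ = (if i = j then 1 - α else 0) + α := by
    split_ifs with hij
    · simp [hij, hb.norm_eq]
    · simp [hb.inner_eq i j hij]
  simp only [sum_inner, real_inner_smul_left, h, mul_add, sum_add_distrib, mul_ite, mul_zero,
    sum_ite_eq', mem_univ, if_true, ← sum_mul]
  ring

lemma norm_sum_smul_sq (hb : IsEquiangular α b) (c : ι → ℝ) :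
    ‖∑ i, c i • b i‖ ^ 2 = (1 - α) * ∑ i, c i ^ 2 + α * (∑ i, c i) ^ 2 := by
  rw [← real_inner_self_eq_norm_sq, inner_sum]
  simp only [real_inner_smul_right, hb.inner_sum_smul, mul_add, sum_add_distrib, ← sum_mul]
  simp only [mul_left_comm (c _), ← mul_sum, sq]
  ring

lemma mul_sum_sq_le (hb : IsEquiangular α b) (hα : 0 ≤ α) (c : ι → ℝ) :
    (1 - α) * ∑ i, c i ^ 2 ≤ ‖∑ i, c i • b i‖ ^ 2 := by
  rw [hb.norm_sum_smul_sq]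
  exact le_add_of_nonneg_right (by positivity)

lemma linearIndependent {ι : Type*} [Finite ι] {b : ι → E} (hb : IsEquiangular α b) (hα : 0 ≤ α)
    (hα' : α < 1) : LinearIndependent ℝ b := by
  cases nonempty_fintype ι
  refine Fintype.linearIndependent_iff.2 fun c hc ↦ ?_
  have h := hb.mul_sum_sq_le hα c
  rw [hc, norm_zero, zero_pow two_ne_zero] at h
  have h₀ : ∑ i, c i ^ 2 = 0 := le_antisymm (by nlinarith) (by positivity)
  exact fun i ↦ by simpa using (sum_eq_zero_iff_of_nonneg fun i _ ↦ sq_nonneg (c i)).1 h₀ i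

/-- Expand both squares and compare the Gram matrices. -/
lemma abs_norm_sum_smul_sq_sub_le (hb : IsEquiangular α b) (hα : 0 ≤ α) (hα' : α < 1)
    {t : ι → E} {η : ℝ} (ht : ∀ i, ‖t i‖ = 1) (hη₀ : 0 ≤ η)
    (hη : ∀ i j, i ≠ j → |⟪t i, t j⟫ - α| ≤ η) (c : ι → ℝ) :
    |‖∑ i, c i • t i‖ ^ 2 - ‖∑ i, c i • b i‖ ^ 2| ≤
      Fintype.card ι * η / (1 - α) * ‖∑ i, c i • b i‖ ^ 2 := by
  have hgram (i j) : |⟪t i, t j⟫ - ⟪b i, b j⟫| ≤ η := by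
    obtain rfl | hij := eq_or_ne i j
    · simpa [ht, hb.norm_eq]
    · simpa [hb.inner_eq i j hij] using hη i j hij
  have hexpand : ‖∑ i, c i • t i‖ ^ 2 - ‖∑ i, c i • b i‖ ^ 2 =
      ∑ i, ∑ j, c i * c j * (⟪t i, t j⟫ - ⟪b i, b j⟫) := by
    simp only [norm_sum_smul_sq_eq_sum_inner, mul_sub, sum_sub_distrib]
  have hcs : (∑ i, |c i|) ^ 2 ≤ Fintype.card ι * ∑ i, c i ^ 2 := by
    simpa using sq_sum_le_card_mul_sum_sq (s := univ) (f := fun i ↦ |c i|)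
  rw [hexpand]
  calc |∑ i, ∑ j, c i * c j * (⟪t i, t j⟫ - ⟪b i, b j⟫)|
      ≤ ∑ i, ∑ j, |c i| * |c j| * η := by
        refine (abs_sum_le_sum_abs _ _).trans (sum_le_sum fun i _ ↦
          (abs_sum_le_sum_abs _ _).trans (sum_le_sum fun j _ ↦ ?_))
        rw [abs_mul, abs_mul]
        gcongr
        exact hgram i j
    _ = η * (∑ i, |c i|) ^ 2 := by
        simp only [sq, sum_mul_sum, ← sum_mul, mul_comm η]
    _ ≤ Fintype.card ι * η / (1 - α) * ((1 - α) * ∑ i, c i ^ 2) := by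
        have : 1 - α ≠ 0 := by linarith
        field_simp
        nlinarith
    _ ≤ _ := by
        have : 0 ≤ 1 - α := by linarith
        gcongr
        exact hb.mul_sum_sq_le hα c

variable [FiniteDimensional ℝ E]

lemma span_eq_top (hb : IsEquiangular α b) (hα : 0 ≤ α) (hα' : α < 1)
    (hcard : Fintype.card ι = Module.finrank ℝ E) : Submodule.span ℝ (Set.range b) = ⊤ :=
  (hb.linearIndependent hα hα').span_eq_top_of_card_eq_finrank' hcard

lemma exists_eq_sum_smul (hb : IsEquiangular α b) (hα : 0 ≤ α) (hα' : α < 1)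
    (hcard : Fintype.card ι = Module.finrank ℝ E) (v : E) : ∃ c : ι → ℝ, ∑ i, c i • b i = v :=
  (Submodule.mem_span_range_iff_exists_fun ℝ).1 (hb.span_eq_top hα hα' hcard ▸ Submodule.mem_top)

lemma mul_norm_sq_le (hb : IsEquiangular α b) (hα : 0 ≤ α) (hα' : α < 1)
    (hcard : Fintype.card ι = Module.finrank ℝ E) (v : E) :
    (1 - α) * ‖v‖ ^ 2 ≤ ∑ i, ⟪v, b i⟫ ^ 2 := by
  obtain ⟨c, rfl⟩ := hb.exists_eq_sum_smul hα hα' hcard v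
  set v := ∑ i, c i • b i
  have hv : ‖v‖ ^ 2 = ∑ i, c i * ⟪v, b i⟫ := by
    simp only [← real_inner_smul_right, ← inner_sum, v, real_inner_self_eq_norm_sq]
  have hcs := sum_mul_sq_le_sq_mul_sq univ c fun i ↦ ⟪v, b i⟫
  rw [← hv] at hcs
  have hc := hb.mul_sum_sq_le hα c
  obtain h | h := (sq_nonneg ‖v‖).eq_or_lt
  · rw [← h, mul_zero]
    positivity
  · refine le_of_mul_le_mul_right ?_ h
    calc (1 - α) * ‖v‖ ^ 2 * ‖v‖ ^ 2 = (1 - α) * (‖v‖ ^ 2) ^ 2 := by ring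
      _ ≤ (1 - α) * ((∑ i, c i ^ 2) * ∑ i, ⟪v, b i⟫ ^ 2) := by gcongr
      _ = ((1 - α) * ∑ i, c i ^ 2) * ∑ i, ⟪v, b i⟫ ^ 2 := by ring
      _ ≤ ‖v‖ ^ 2 * ∑ i, ⟪v, b i⟫ ^ 2 := by gcongr
      _ = _ := mul_comm _ _

end IsEquiangular

variable [FiniteDimensional ℝ E]

/-- The right singular vectors of `A`. -/
lemma exists_orthonormalBasis_inner_map_eq_zero (A : E →ₗ[ℝ] E) :
    ∃ v : OrthonormalBasis (Fin (Module.finrank ℝ E)) ℝ E,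
      ∀ i j, i ≠ j → ⟪A (v i), A (v j)⟫ = 0 := by
  have hS := A.isSymmetric_adjoint_mul_self
  refine ⟨hS.eigenvectorBasis rfl, fun i j hij ↦ ?_⟩
  rw [← LinearMap.adjoint_inner_left, ← Module.End.mul_apply, hS.apply_eigenvectorBasis,
    inner_smul_left, (hS.eigenvectorBasis rfl).orthonormal.2 hij, mul_zero]

lemma pos_and_abs_sub_one_le {s δ : ℝ} (hs : 0 ≤ s) (hδ : δ < 1) (h : |s ^ 2 - 1| ≤ δ) :
    0 < s ∧ |s - 1| ≤ δ := by
  rw [← one_pow 2, sq_sub_sq, abs_mul, abs_of_nonneg (by positivity)] at h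
  refine ⟨hs.lt_of_ne fun h₀ ↦ ?_, by nlinarith [abs_nonneg (s - 1)]⟩
  norm_num [← h₀] at h
  linarith

/-- The isometry is the polar factor of `A`. -/
lemma exists_linearIsometry_norm_sub_le (A : E →ₗ[ℝ] E) {δ : ℝ} (hδ₀ : 0 ≤ δ) (hδ₁ : δ < 1)
    (hA : ∀ v, |‖A v‖ ^ 2 - ‖v‖ ^ 2| ≤ δ * ‖v‖ ^ 2) :
    ∃ U : E →ₗᵢ[ℝ] E, ∀ v, ‖A v - U v‖ ≤ δ * ‖v‖ := by
  obtain ⟨v, hv⟩ := exists_orthonormalBasis_inner_map_eq_zero A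
  have hs (i) := pos_and_abs_sub_one_le (norm_nonneg _) hδ₁ (by simpa using hA (v i))
  let u := fun i ↦ ‖A (v i)‖⁻¹ • A (v i)
  have hAv (i) : A (v i) = ‖A (v i)‖ • u i := (smul_inv_smul₀ (hs i).1.ne' _).symm
  have hu : Orthonormal ℝ u := by
    refine ⟨fun i ↦ ?_, fun i j hij ↦ ?_⟩
    · rw [norm_smul, norm_inv, norm_norm, inv_mul_cancel₀ (hs i).1.ne']
    · simp only [u, inner_smul_left, inner_smul_right, hv i j hij, mul_zero]
  let f := v.toBasis.constr ℝ u
  have hf : f ∘ v.toBasis = u := funext (v.toBasis.constr_basis ℝ u)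
  have hf' (i) : f (v i) = u i := by simpa using congrFun hf i
  have hv' : Orthonormal ℝ v.toBasis := by simpa only [v.coe_toBasis] using v.orthonormal
  refine ⟨f.isometryOfOrthonormal hv' (hf ▸ hu), fun w ↦ ?_⟩
  have hw : A w - f w = ∑ i, (⟪v i, w⟫ * (‖A (v i)‖ - 1)) • u i := by
    conv_lhs => rw [← v.sum_repr' w]
    simp only [map_sum, map_smul, hf', ← sum_sub_distrib, ← smul_sub, mul_smul, sub_smul,
      one_smul, ← hAv]
  have hu₀ : IsEquiangular 0 u := ⟨hu.1, fun i j hij ↦ hu.2 hij⟩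
  rw [LinearMap.coe_isometryOfOrthonormal, ← sq_le_sq₀ (norm_nonneg _) (by positivity), mul_pow,
    hw, hu₀.norm_sum_smul_sq, ← v.sum_sq_norm_inner_right, sub_zero, one_mul, zero_mul, add_zero,
    mul_sum]
  refine sum_le_sum fun i _ ↦ ?_
  rw [mul_pow, mul_comm, Real.norm_eq_abs, sq_abs, ← sq_abs (‖A (v i)‖ - 1)]
  gcongr
  exact (hs i).2

/-- The operator taking each `b i` to `t i` is almost isometric. -/
lemma IsEquiangular.exists_isEquiangular_norm_sub_le [Fintype ι] {α : ℝ} {b : ι → E}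
    (hb : IsEquiangular α b) (hα : 0 ≤ α) (hα' : α < 1)
    (hcard : Fintype.card ι = Module.finrank ℝ E) {t : ι → E} {η : ℝ} (ht : ∀ i, ‖t i‖ = 1)
    (hη : ∀ i j, i ≠ j → |⟪t i, t j⟫ - α| ≤ η) (hη₀ : 0 ≤ η)
    (hη₁ : Fintype.card ι * η < 1 - α) :
    ∃ b' : ι → E, IsEquiangular α b' ∧ ∀ i, ‖t i - b' i‖ ≤ Fintype.card ι * η / (1 - α) := by
  let B := Module.Basis.mk (hb.linearIndependent hα hα')
    (hb.span_eq_top hα hα' hcard).ge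
  have hB (i) : B i = b i := by simp [B]
  obtain ⟨U, hU⟩ := exists_linearIsometry_norm_sub_le (B.constr ℝ t)
    (div_nonneg (by positivity) (sub_pos.2 hα').le) ((div_lt_one (sub_pos.2 hα')).2 hη₁) fun v ↦ by
      have h := hb.abs_norm_sum_smul_sq_sub_le hα hα' ht hη₀ hη (B.equivFun v)
      simp only [← hB, B.sum_equivFun] at h
      rwa [B.constr_apply_fintype ℝ]
  refine ⟨U ∘ b, ⟨fun i ↦ by simp [hb.norm_eq], fun i j hij ↦ by simp [hb.inner_eq i j hij]⟩,
    fun i ↦ ?_⟩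
  simpa [← hB, B.constr_basis, (hB i).symm ▸ hb.norm_eq i] using hU (b i)

end Equiangular

/-! ### The 600-cell containing a tetrahedron -/

section FrameVec

lemma exists_isEquiangular_goldenRatio :
    ∃ b : Fin 4 → EuclideanSpace ℝ (Fin 4), IsEquiangular (φ / 2) b := by
  have hφ := Real.goldenRatio_sq
  generalize φ = g at hφ ⊢
  refine ⟨![!₂[1, 0, 0, 0], !₂[g / 2, 1 / 2, (g - 1) / 2, 0], !₂[g / 2, 1 / 2, (1 - g) / 2, 0],
    !₂[g / 2, (g - 1) / 2, 0, 1 / 2]], fun i ↦ ?_, fun i j hij ↦ ?_⟩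
  · rw [← pow_eq_one_iff_of_nonneg (norm_nonneg _) two_ne_zero, EuclideanSpace.real_norm_sq_eq,
      Fin.sum_univ_four]
    fin_cases i <;> simp only [Fin.zero_eta, Fin.mk_one, Fin.reduceFinMk, Matrix.cons_val]
    · norm_num
    all_goals linear_combination hφ / 2
  · simp only [PiLp.inner_apply, Fin.sum_univ_four, RCLike.inner_apply, conj_trivial]
    fin_cases i <;> fin_cases j <;> try exact absurd rfl hij
    all_goals
      simp only [Fin.zero_eta, Fin.mk_one, Fin.reduceFinMk, Matrix.cons_val]
      first | ring1 | linear_combination hφ / 4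

/-- The vector whose inner products with an equiangular frame `b` are `ρ m / 2`. -/
noncomputable def frameVec {E : Type*} [AddCommGroup E] [Module ℝ E] (b : Fin 4 → E)
    (ρ : Fin 4 → ℝ) : E :=
  ∑ m, ((1 + φ) * ρ m - (φ - 1) * ∑ i, ρ i) • b m

variable {E : Type*} [NormedAddCommGroup E] [InnerProductSpace ℝ E] {b : Fin 4 → E}

namespace IsEquiangular

lemma inner_frameVec_left (hb : IsEquiangular (φ / 2) b) (ρ : Fin 4 → ℝ) (m : Fin 4) :
    ⟪frameVec b ρ, b m⟫ = ρ m / 2 := by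
  have hφ := Real.goldenRatio_sq
  rw [frameVec, hb.inner_sum_smul]
  simp only [Fin.sum_univ_four]
  generalize φ = g at hφ ⊢
  linear_combination -(2 * (ρ 0 + ρ 1 + ρ 2 + ρ 3) + ρ m) / 2 * hφ

lemma inner_frameVec_frameVec (hb : IsEquiangular (φ / 2) b) (ρ σ : Fin 4 → ℝ) :
    ⟪frameVec b ρ, frameVec b σ⟫ = goldenForm φ ρ σ / 2 := by
  rw [show frameVec b σ = ∑ m, ((1 + φ) * σ m - (φ - 1) * ∑ i, σ i) • b m from rfl, inner_sum]
  simp only [real_inner_smul_right, hb.inner_frameVec_left, goldenForm, Fin.sum_univ_four]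
  generalize φ = g
  ring

lemma norm_frameVec (hb : IsEquiangular (φ / 2) b) {ρ : Fin 4 → GoldenInt}
    (hρ : ρ ∈ goldenRoots) : ‖frameVec b (toReal ∘ ρ)‖ = 1 := by
  rw [← pow_eq_one_iff_of_nonneg (norm_nonneg _) two_ne_zero, ← real_inner_self_eq_norm_sq,
    hb.inner_frameVec_frameVec, toReal_goldenForm_self hρ, div_self two_ne_zero]

lemma inner_frameVec_le (hb : IsEquiangular (φ / 2) b) {ρ σ : Fin 4 → GoldenInt}
    (hρ : ρ ∈ goldenRoots) (hσ : σ ∈ goldenRoots) (hne : ρ ≠ σ) :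
    ⟪frameVec b (toReal ∘ ρ), frameVec b (toReal ∘ σ)⟫ ≤ φ / 2 := by
  rw [hb.inner_frameVec_frameVec]
  linarith [goldenForm_le_goldenRatio hρ hσ hne]

lemma inner_frameVec_of_goldenForm_eq_omega (hb : IsEquiangular (φ / 2) b)
    {ρ σ : Fin 4 → GoldenInt} (h : goldenForm ω ρ σ = ω) :
    ⟪frameVec b (toReal ∘ ρ), frameVec b (toReal ∘ σ)⟫ = φ / 2 := by
  rw [hb.inner_frameVec_frameVec, ← toReal_goldenForm, h, toReal_omega]

lemma isEquiangular_frameVec (hb : IsEquiangular (φ / 2) b) {ι : Type*} [LinearOrder ι]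
    {c : ι → Fin 4 → GoldenInt} (hc : ∀ m, c m ∈ goldenRoots)
    (hadj : ∀ m n, m < n → goldenForm ω (c m) (c n) = ω) :
    IsEquiangular (φ / 2) fun m ↦ frameVec b (toReal ∘ c m) := by
  refine ⟨fun m ↦ hb.norm_frameVec (hc m), fun m n hmn ↦ ?_⟩
  obtain hlt | hlt := hmn.lt_or_gt
  · exact hb.inner_frameVec_of_goldenForm_eq_omega (hadj m n hlt)
  · rw [real_inner_comm]
    exact hb.inner_frameVec_of_goldenForm_eq_omega (hadj n m hlt)

variable [FiniteDimensional ℝ E]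

lemma frameVec_inner (hb : IsEquiangular (φ / 2) b) (hE : Module.finrank ℝ E = 4) (v : E) :
    frameVec b (fun m ↦ 2 * ⟪v, b m⟫) = v := by
  obtain ⟨hφ, hφ'⟩ := goldenRatio_mem_Ioo
  have h := hb.mul_norm_sq_le (by linarith) (by linarith) (by simp [hE])
    (frameVec b (fun m ↦ 2 * ⟪v, b m⟫) - v)
  simp only [inner_sub_left, hb.inner_frameVec_left, mul_div_cancel_left₀ _ (two_ne_zero' ℝ),
    sub_self, zero_pow two_ne_zero, sum_const_zero] at h
  rw [← sub_eq_zero, ← norm_eq_zero, ← sq_eq_zero_iff]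
  nlinarith

lemma frameVec_baseCode (hb : IsEquiangular (φ / 2) b) (hE : Module.finrank ℝ E = 4)
    (m : Fin 4) : frameVec b (toReal ∘ baseCode m) = b m := by
  conv_rhs => rw [← hb.frameVec_inner hE (b m)]
  congr 1
  ext i
  obtain rfl | him := eq_or_ne i m
  · simp [baseCode, hb.norm_eq, map_ofNat]
  · simp [baseCode, him, hb.inner_eq m i him.symm, toReal_omega, mul_div_cancel₀]

lemma norm_sub_frameVec_le (hb : IsEquiangular (φ / 2) b) (hE : Module.finrank ℝ E = 4) {v : E}
    {ρ : Fin 4 → ℝ} {η : ℝ} (hη₀ : 0 ≤ η) (hη : ∀ m, |⟪v, b m⟫ - ρ m / 2| ≤ η) :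
    ‖v - frameVec b ρ‖ ≤ 5 * η := by
  obtain ⟨hφ, hφ'⟩ := goldenRatio_mem_Ioo
  have h := hb.mul_norm_sq_le (by linarith) (by linarith) (by simp [hE]) (v - frameVec b ρ)
  have hsum : ∑ m, ⟪v - frameVec b ρ, b m⟫ ^ 2 ≤ 4 * η ^ 2 := by
    refine (sum_le_card_nsmul _ _ (η ^ 2) fun m _ ↦ ?_).trans (by simp)
    rw [inner_sub_left, hb.inner_frameVec_left, ← sq_abs]
    gcongr
    exact hη m
  refine abs_le_of_sq_le_sq' ?_ (by positivity) |>.2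
  nlinarith [sq_nonneg ‖v - frameVec b ρ‖]

lemma exists_mem_goldenRoots_norm_sub_le (hb : IsEquiangular (φ / 2) b)
    (hE : Module.finrank ℝ E = 4) {v : E} (hv : ‖v‖ = 1)
    (h : ∀ m, ∃ z ∈ goldenValues, |⟪v, b m⟫ - toReal z / 2| ≤ 2 / 10 ^ 6) :
    ∃ ρ ∈ goldenRoots, ‖v - frameVec b (toReal ∘ ρ)‖ ≤ 1 / 10 ^ 5 := by
  choose ρ hρ hvρ using h
  have hle : ‖v - frameVec b (toReal ∘ ρ)‖ ≤ 1 / 10 ^ 5 :=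
    (hb.norm_sub_frameVec_le hE (by norm_num) hvρ).trans (by norm_num)
  refine ⟨ρ, mem_goldenRoots_of_abs_sub_two_lt hρ ?_, hle⟩
  have hnorm := (abs_norm_sub_norm_le v _).trans hle
  have hsq := hb.inner_frameVec_frameVec (toReal ∘ ρ) (toReal ∘ ρ)
  rw [real_inner_self_eq_norm_sq] at hsq
  rw [hv, abs_le] at hnorm
  rw [abs_lt]
  constructor <;> nlinarith

end IsEquiangular

end FrameVec

/-! ### Existence of a tetrahedron -/

section ContactGraph

/-- The graph joining the vectors at an angle of about `π / 5`. -/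
def contactGraph {ι E : Type*} [NormedAddCommGroup E] [InnerProductSpace ℝ E] (x : ι → E) :
    SimpleGraph ι where
  Adj i j := i ≠ j ∧ 0.76 ≤ ⟪x i, x j⟫
  symm := ⟨fun i j h ↦ ⟨h.1.symm, real_inner_comm (x i) (x j) ▸ h.2⟩⟩

variable {ι : Type*} {x : ι → EuclideanSpace ℝ (Fin 4)}

open scoped Classical in
lemma sum_sum_inner_le (hx : ∀ i, ‖x i‖ = 1)
    (hgap : ∀ i j, i ≠ j → ⟪x i, x j⟫ ≤ 0.51 ∨ ⟪x i, x j⟫ ∈ Set.Icc 0.808 0.81)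
    {f : ℝ → ℝ} {p q r : ℝ} (hr : 0 ≤ r) (hone : f 1 ≤ p + q) (hlow : ∀ t ≤ 0.51, f t ≤ p)
    (hadj : ∀ t ∈ Set.Icc 0.808 0.81, f t ≤ p + r) {s : Finset ι} {d : ℕ}
    (hd : ∀ i ∈ s, #{j ∈ s | (contactGraph x).Adj i j} ≤ d) :
    ∑ i ∈ s, ∑ j ∈ s, f ⟪x i, x j⟫ ≤ #s * (p * #s + q + r * d) := by
  have hle (i j) : f ⟪x i, x j⟫ ≤
      p + (if i = j then q else 0) + if (contactGraph x).Adj i j then r else 0 := by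
    obtain rfl | hij := eq_or_ne i j
    · simpa [hx] using hone
    · obtain h | h := hgap i j hij
      · have hnadj : ¬ (contactGraph x).Adj i j := fun hadj ↦ by linarith [hadj.2]
        simpa [hij, hnadj] using hlow _ h
      · have hij' : (contactGraph x).Adj i j := ⟨hij, by linarith [h.1]⟩
        simpa [hij, hij'] using hadj _ h
  rw [← nsmul_eq_mul]
  refine sum_le_card_nsmul _ _ _ fun i hi ↦ ?_
  calc ∑ j ∈ s, f ⟪x i, x j⟫
      ≤ ∑ j ∈ s, (p + (if i = j then q else 0) + if (contactGraph x).Adj i j then r else 0) :=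
        sum_le_sum fun j _ ↦ hle i j
    _ = p * #s + q + r * #{j ∈ s | (contactGraph x).Adj i j} := by
        simp [sum_add_distrib, hi, ← sum_filter, mul_comm]
    _ ≤ p * #s + q + r * d := by
        gcongr
        exact hd i hi

open scoped Classical in
lemma norm_sum_sq_le (hx : ∀ i, ‖x i‖ = 1)
    (hgap : ∀ i j, i ≠ j → ⟪x i, x j⟫ ≤ 0.51 ∨ ⟪x i, x j⟫ ∈ Set.Icc 0.808 0.81)
    {s : Finset ι} {d : ℕ} (hd : ∀ i ∈ s, #{j ∈ s | (contactGraph x).Adj i j} ≤ d) :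
    ‖∑ i ∈ s, x i‖ ^ 2 ≤ #s * (0.51 * #s + 0.49 + 0.3 * d) := by
  rw [← real_inner_self_eq_norm_sq, sum_inner]
  simp only [inner_sum]
  exact sum_sum_inner_le hx hgap (f := id) (by norm_num) (by norm_num) (fun t ht ↦ ht)
    (fun t ht ↦ by simp only [id]; linarith [ht.2]) hd

lemma card_mul_le_norm_mul_norm_sum {s : Finset ι} {y : EuclideanSpace ℝ (Fin 4)} {a : ℝ}
    (ha : ∀ k ∈ s, a ≤ ⟪y, x k⟫) : #s * a ≤ ‖y‖ * ‖∑ k ∈ s, x k‖ := by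
  refine le_trans ?_ (real_inner_le_norm _ _)
  rw [inner_sum, ← nsmul_eq_mul]
  exact card_nsmul_le_sum s _ a ha

lemma inner_mem_Icc_of_adj
    (hgap : ∀ i j, i ≠ j → ⟪x i, x j⟫ ≤ 0.51 ∨ ⟪x i, x j⟫ ∈ Set.Icc 0.808 0.81) {i j : ι}
    (hij : (contactGraph x).Adj i j) : ⟪x i, x j⟫ ∈ Set.Icc 0.808 0.81 :=
  (hgap i j hij.1).resolve_left fun h ↦ by linarith [hij.2]

open scoped Classical in
/-- If three common neighbours of `i` and `j` had no contact, their sum would be too short for its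
inner product with `x i + x j`. -/
lemma exists_adj_common_neighbors (hx : ∀ i, ‖x i‖ = 1)
    (hgap : ∀ i j, i ≠ j → ⟪x i, x j⟫ ≤ 0.51 ∨ ⟪x i, x j⟫ ∈ Set.Icc 0.808 0.81) {i j : ι}
    (hij : (contactGraph x).Adj i j) {s : Finset ι} (hs : #s = 3)
    (hi : ∀ k ∈ s, (contactGraph x).Adj i k) (hj : ∀ k ∈ s, (contactGraph x).Adj j k) :
    ∃ k ∈ s, ∃ l ∈ s, (contactGraph x).Adj k l := by
  by_contra! h
  have hle := norm_sum_sq_le hx hgap (s := s) (d := 0) fun k hk ↦ by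
    simpa [filter_eq_empty_iff] using h k hk
  have hge := card_mul_le_norm_mul_norm_sum (y := x i + x j) (a := 0.808 + 0.808) fun k hk ↦ by
    rw [inner_add_left]
    exact add_le_add (inner_mem_Icc_of_adj hgap (hi k hk)).1 (inner_mem_Icc_of_adj hgap (hj k hk)).1
  have hsq := norm_add_sq_real (x i) (x j)
  rw [hx, hx] at hsq
  rw [hs] at hle hge
  have hsq' := mul_self_le_mul_self (by norm_num) hge
  have := (inner_mem_Icc_of_adj hgap hij).2
  have hmul : ‖x i + x j‖ ^ 2 * ‖∑ k ∈ s, x k‖ ^ 2 ≤ 3.62 * 6.06 := by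
    gcongr <;> norm_num at hle ⊢ <;> linarith
  norm_num at hsq' hmul
  linarith

variable [Fintype ι]

open scoped Classical in
lemma exists_eight_le_degree (hx : ∀ i, ‖x i‖ = 1)
    (hgap : ∀ i j, i ≠ j → ⟪x i, x j⟫ ≤ 0.51 ∨ ⟪x i, x j⟫ ∈ Set.Icc 0.808 0.81)
    (hcard : Fintype.card ι = 120) : ∃ i, 8 ≤ (contactGraph x).degree i := by
  by_contra! hdeg
  have hlower := hasNonnegChebyshevExpansion_neighbourBound.mul_card_sq_le univ hx
  have hupper := sum_sum_inner_le hx hgap (s := univ) (d := 7)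
    (f := fun t ↦ t ^ 2 * (t - 1 / 2) * (t + 7 / 10) ^ 2) (p := 0.0039) (q := 1.45) (r := 0.47)
    (by norm_num) (by norm_num) ?_ ?_ ?_
  · rw [card_univ, hcard] at hlower hupper
    norm_num at hlower hupper
    linarith
  · intro t ht
    obtain h | h := le_total t (1 / 2)
    · nlinarith [mul_nonneg (sub_nonneg.2 h) (sq_nonneg (t * (t + 7 / 10)))]
    · calc t ^ 2 * (t - 1 / 2) * (t + 7 / 10) ^ 2
          ≤ 0.51 ^ 2 * (0.51 - 1 / 2) * (0.51 + 7 / 10) ^ 2 := by gcongr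
        _ ≤ 0.0039 := by norm_num
  · rintro t ⟨ht₁, ht₂⟩
    calc t ^ 2 * (t - 1 / 2) * (t + 7 / 10) ^ 2
        ≤ 0.81 ^ 2 * (0.81 - 1 / 2) * (0.81 + 7 / 10) ^ 2 := by gcongr; linarith
      _ ≤ 0.0039 + 0.47 := by norm_num
  · intro i _
    rw [← SimpleGraph.neighborFinset_eq_filter]
    exact Nat.le_of_lt_succ (hdeg i)

open scoped Classical in
/-- If the neighbours of `i` had few contacts, their sum would be too short for its inner product
with `x i`. -/
lemma exists_three_le_card_common_neighbors (hx : ∀ i, ‖x i‖ = 1)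
    (hgap : ∀ i j, i ≠ j → ⟪x i, x j⟫ ≤ 0.51 ∨ ⟪x i, x j⟫ ∈ Set.Icc 0.808 0.81) {i : ι}
    (hi : 8 ≤ (contactGraph x).degree i) :
    ∃ j, (contactGraph x).Adj i j ∧
      3 ≤ #{k ∈ (contactGraph x).neighborFinset i | (contactGraph x).Adj j k} := by
  by_contra! h
  set N := (contactGraph x).neighborFinset i
  have hN {k} (hk : k ∈ N) : (contactGraph x).Adj i k := by simpa [N] using hk
  have hle := norm_sum_sq_le hx hgap (s := N) (d := 2) fun j hj ↦ Nat.le_of_lt_succ (h j (hN hj))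
  have hge := card_mul_le_norm_mul_norm_sum fun k hk ↦ (inner_mem_Icc_of_adj hgap (hN hk)).1
  have hcard : (8 : ℝ) ≤ #N := mod_cast hi
  rw [hx, one_mul] at hge
  push_cast at hle
  nlinarith

lemma not_cliqueFree_four_contactGraph (hx : ∀ i, ‖x i‖ = 1)
    (hgap : ∀ i j, i ≠ j → ⟪x i, x j⟫ ≤ 0.51 ∨ ⟪x i, x j⟫ ∈ Set.Icc 0.808 0.81)
    (hcard : Fintype.card ι = 120) : ¬ (contactGraph x).CliqueFree 4 := by
  classical
  obtain ⟨i, hi⟩ := exists_eight_le_degree hx hgap hcard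
  obtain ⟨j, hij, hcommon⟩ := exists_three_le_card_common_neighbors hx hgap hi
  obtain ⟨s, hs, hs₃⟩ := exists_subset_card_eq hcommon
  have hs' (k) (hk : k ∈ s) := mem_filter.1 (hs hk)
  have hi (k) (hk : k ∈ s) : (contactGraph x).Adj i k := by simpa using (hs' k hk).1
  obtain ⟨k, hk, l, hl, hkl⟩ := exists_adj_common_neighbors hx hgap hij hs₃ hi fun k hk ↦
    (hs' k hk).2
  have hclique : (contactGraph x).IsNClique 3 {j, k, l} :=
    SimpleGraph.is3Clique_triple_iff.2 ⟨(hs' k hk).2, (hs' l hl).2, hkl⟩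
  exact (hclique.insert (a := i) fun m hm ↦ by
    obtain rfl | rfl | rfl : m = j ∨ m = k ∨ m = l := by simpa using hm
    exacts [hij, hi m hk, hi m hl]).not_cliqueFree

end ContactGraph

/-! ### Propagation from cell to cell -/

lemma exists_cell_rank_lt (ρ : goldenRoots) (hbase : ∀ m, ρ.1 ≠ baseCode m) :
    ∃ c : Fin 4 → goldenRoots, c 0 = ρ ∧ (∀ m ≠ 0, rank (c m) < rank ρ) ∧
      ∀ m n, m < n → goldenForm ω (c m) (c n) = ω := by
  obtain ⟨m, hm⟩ | ⟨p, hp, ⟨hp', hρp⟩, q, hq, ⟨hq', hρq, hpq⟩, r, hr, hr', hρr, hpr, hqr⟩ :=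
    (exists_cell_of_mem_goldenRoots ρ ρ.2).2
  · exact absurd hm (hbase m)
  · refine ⟨![ρ, ⟨p, hp⟩, ⟨q, hq⟩, ⟨r, hr⟩], rfl, ?_, ?_⟩ <;>
      simp only [Fin.forall_fin_succ, Fin.forall_fin_zero] <;> simp_all

section Propagation

variable {E : Type*} [NormedAddCommGroup E] [InnerProductSpace ℝ E]

lemma abs_inner_sub_inner_le {u v u' v' : E} (hu : ‖u‖ = 1) (hv' : ‖v'‖ = 1) :
    |⟪u, v⟫ - ⟪u', v'⟫| ≤ ‖u - u'‖ + ‖v - v'‖ := by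
  calc |⟪u, v⟫ - ⟪u', v'⟫| = |⟪u - u', v'⟫ + ⟪u, v - v'⟫| := by
        rw [inner_sub_left, inner_sub_right]
        ring_nf
    _ ≤ |⟪u - u', v'⟫| + |⟪u, v - v'⟫| := abs_add_le _ _
    _ ≤ ‖u - u'‖ * ‖v'‖ + ‖u‖ * ‖v - v'‖ :=
        add_le_add (abs_real_inner_le_norm _ _) (abs_real_inner_le_norm _ _)
    _ = ‖u - u'‖ + ‖v - v'‖ := by rw [hu, hv', one_mul, mul_one]

lemma lt_norm_sub_of_inner_le {u v : E} (hu : ‖u‖ = 1) (hv : ‖v‖ = 1) (h : ⟪u, v⟫ ≤ 0.81) :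
    0.6 < ‖u - v‖ := by
  have := norm_sub_sq_real u v
  rw [hu, hv] at this
  nlinarith [norm_nonneg (u - v)]

lemma eq_of_norm_sub_le {ι : Type*} {x : ι → E} (hx : ∀ i, ‖x i‖ = 1)
    (hinner : ∀ i j, i ≠ j → ⟪x i, x j⟫ ≤ 0.81) {i j : ι} {v : E} (hi : ‖v - x i‖ ≤ 0.3)
    (hj : ‖v - x j‖ ≤ 0.3) : i = j := by
  by_contra hij
  have hfar := lt_norm_sub_of_inner_le (hx i) (hx j) (hinner i j hij)
  have htri := norm_sub_le_norm_sub_add_norm_sub (x i) v (x j)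
  rw [norm_sub_rev (x i) v] at htri
  linarith

lemma inner_sub_eq_neg_norm_sub_sq_div_two {u v : E} (hu : ‖u‖ = 1) (hv : ‖v‖ = 1) :
    ⟪u - v, v⟫ = -(‖u - v‖ ^ 2 / 2) := by
  rw [inner_sub_left, real_inner_self_eq_norm_sq, norm_sub_sq_real, hu, hv]
  ring

variable [FiniteDimensional ℝ E]

/-- The inner product with `b i` itself only enters to second order, both vectors being unit. -/
lemma IsEquiangular.mul_norm_sub_sq_le {ι : Type*} [Fintype ι] {α : ℝ} {b : ι → E}
    (hb : IsEquiangular α b) (hα : 0 ≤ α) (hα' : α < 1)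
    (hcard : Fintype.card ι = Module.finrank ℝ E) {v : E} (hv : ‖v‖ = 1) {i : ι} {η : ℝ}
    (hη : ∀ j, j ≠ i → |⟪v, b j⟫ - α| ≤ η) :
    (1 - α) * ‖v - b i‖ ^ 2 ≤ (‖v - b i‖ ^ 2 / 2) ^ 2 + (Fintype.card ι - 1 : ℕ) * η ^ 2 := by
  classical
  refine (hb.mul_norm_sq_le hα hα' hcard _).trans ?_
  rw [← add_sum_erase _ _ (mem_univ i), inner_sub_eq_neg_norm_sub_sq_div_two hv (hb.norm_eq i),
    neg_sq, ← card_univ, ← card_erase_of_mem (mem_univ i), ← nsmul_eq_mul]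
  gcongr
  refine sum_le_card_nsmul _ _ _ fun j hj ↦ ?_
  have hji := ne_of_mem_erase hj
  rw [inner_sub_left, hb.inner_eq i j hji.symm, ← sq_abs]
  gcongr
  exact hη j hji

lemma norm_sub_le_of_cell (hE : Module.finrank ℝ E = 4) {v w : Fin 4 → E} {B : ℝ}
    (hw : IsEquiangular (φ / 2) w) (hv : ∀ m, ‖v m‖ = 1) (hnear : ‖v 0 - w 0‖ ≤ 0.01)
    (hadj : ∀ m ≠ 0, |⟪v 0, v m⟫ - φ / 2| ≤ B) (hB : ∀ m ≠ 0, ‖v m - w m‖ ≤ B) :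
    ‖v 0 - w 0‖ ≤ 9 * B := by
  obtain ⟨hφ, hφ'⟩ := goldenRatio_mem_Ioo
  have hB₀ : 0 ≤ B := (norm_nonneg _).trans (hB 1 one_ne_zero)
  have h := hw.mul_norm_sub_sq_le (by linarith) (by linarith) (by simp [hE]) (hv 0) (i := 0)
    (η := 2 * B) fun m hm ↦ by
      have hvw := abs_inner_sub_inner_le (u := v 0) (u' := v 0) (v := w m) (hv 0) (hv m)
      rw [sub_self, norm_zero, zero_add, norm_sub_rev] at hvw
      exact (abs_sub_le _ ⟪v 0, v m⟫ _).trans (by linarith [hadj m hm, hB m hm])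
  rw [Fintype.card_fin] at h
  norm_num at h
  refine abs_le_of_sq_le_sq' ?_ (by positivity) |>.2
  have hsq : ‖v 0 - w 0‖ ^ 2 ≤ 0.0001 := by
    calc ‖v 0 - w 0‖ ^ 2 ≤ 0.01 ^ 2 := by gcongr
      _ = 0.0001 := by norm_num
  nlinarith [sq_nonneg ‖v 0 - w 0‖]

lemma norm_sub_frameVec_le_pow_rank (hE : Module.finrank ℝ E = 4) {b : Fin 4 → E}
    (hb : IsEquiangular (φ / 2) b) {y : goldenRoots → E} (hy : ∀ ρ, ‖y ρ‖ = 1)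
    (hnear : ∀ ρ, ‖y ρ - frameVec b (toReal ∘ ρ.1)‖ ≤ 0.01) {B : ℝ} (hB : 0 ≤ B)
    (hbase : ∀ ρ m, ρ.1 = baseCode m → ‖y ρ - b m‖ ≤ B)
    (hadj : ∀ ρ σ : goldenRoots, goldenForm ω ρ.1 σ.1 = ω → |⟪y ρ, y σ⟫ - φ / 2| ≤ B)
    (ρ : goldenRoots) : ‖y ρ - frameVec b (toReal ∘ ρ.1)‖ ≤ 9 ^ rank ρ * B := by
  induction hn : rank ρ using Nat.strong_induction_on generalizing ρ with
  | _ n ih =>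
    have hpow (k : ℕ) : B ≤ 9 ^ k * B :=
      le_mul_of_one_le_left hB (one_le_pow₀ (by norm_num))
    by_cases hρ : ∃ m, ρ.1 = baseCode m
    · obtain ⟨m, hm⟩ := hρ
      rw [hm, hb.frameVec_baseCode hE]
      exact (hbase ρ m hm).trans (hpow n)
    · push Not at hρ
      obtain ⟨c, rfl, hrank, hc⟩ := exists_cell_rank_lt ρ hρ
      have hn₀ : n - 1 + 1 = n := by have := hrank 1 one_ne_zero; lia
      calc ‖y (c 0) - frameVec b (toReal ∘ (c 0).1)‖ ≤ 9 * (9 ^ (n - 1) * B) := by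
            refine norm_sub_le_of_cell hE (v := y ∘ c)
              (hb.isEquiangular_frameVec (fun m ↦ (c m).2) hc) (fun m ↦ hy _) (hnear _)
              (fun m hm ↦ (hadj _ _ (hc 0 m (Fin.pos_of_ne_zero hm))).trans (hpow _))
              fun m hm ↦ (ih _ (hn ▸ hrank m hm) _ rfl).trans ?_
            gcongr
            · norm_num
            · have := hrank m hm; lia
        _ = 9 ^ n * B := by rw [← mul_assoc, ← pow_succ', hn₀]

end Propagation

/-! ### Stability of the 600-cell -/

section Stability

variable {ι : Type*} [Fintype ι] {x : ι → EuclideanSpace ℝ (Fin 4)} {ε : ℝ}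

lemma inner_le_or_mem_Icc (hε : 0 ≤ ε) (hε' : ε ≤ 1 / 10 ^ 200) (hx : ∀ i, ‖x i‖ = 1)
    (hinner : ∀ i j, i ≠ j → ⟪x i, x j⟫ ≤ φ / 2 + 2 * ε) (hcard : Fintype.card ι = 120)
    (i j : ι) (hij : i ≠ j) : ⟪x i, x j⟫ ≤ 0.51 ∨ ⟪x i, x j⟫ ∈ Set.Icc 0.808 0.81 := by
  obtain ⟨hφ, hφ'⟩ := goldenRatio_mem_Ioo
  obtain ⟨z, hz, hzx⟩ := exists_goldenValues_abs_inner_sub_le hε hε' hx hinner hcard hij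
  rw [abs_le] at hzx
  obtain rfl | hzω := eq_or_ne z ω
  · rw [toReal_omega] at hzx
    exact .inr ⟨by linarith, by linarith⟩
  · have hz₁ : toReal z ≤ 1 := by
      simp only [goldenValues, erase_insert_eq_erase, mem_erase, mem_insert, mem_singleton] at hz
      rcases hz with ⟨-, hz⟩
      rcases hz with rfl | rfl | rfl | rfl | rfl | rfl | rfl | rfl | rfl
      all_goals first
        | exact absurd rfl hzω
        | simp only [map_sub, map_neg, map_zero, map_one, map_ofNat, toReal_omega]
          linarith
    exact .inl (by linarith)

lemma exists_tetrahedron_norm_sub_le (hε : 0 ≤ ε) (hε' : ε ≤ 1 / 10 ^ 200) (hx : ∀ i, ‖x i‖ = 1)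
    (hinner : ∀ i j, i ≠ j → ⟪x i, x j⟫ ≤ φ / 2 + 2 * ε) (hcard : Fintype.card ι = 120) :
    ∃ (t : Fin 4 → ι) (b : Fin 4 → EuclideanSpace ℝ (Fin 4)), IsEquiangular (φ / 2) b ∧
      ∀ m, ‖x (t m) - b m‖ ≤ 10 ^ 20 * ε := by
  obtain ⟨hφ, hφ'⟩ := goldenRatio_mem_Ioo
  obtain ⟨b₀, hb₀⟩ := exists_isEquiangular_goldenRatio
  have hclique := not_cliqueFree_four_contactGraph hx
    (inner_le_or_mem_Icc hε hε' hx hinner hcard) hcard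
  obtain ⟨t⟩ := (SimpleGraph.not_cliqueFree_iff_top_isContained 4).1 hclique
  obtain ⟨b, hb, hxb⟩ := hb₀.exists_isEquiangular_norm_sub_le (by linarith) (by linarith) (by simp)
    (fun m ↦ hx (t m)) (η := 10 ^ 18 * ε) (fun m n hmn ↦
      abs_inner_sub_goldenRatio_div_two_le hε hx hinner hcard (t.injective.ne hmn)
        (t.toHom.map_adj hmn).2) (by positivity) (by norm_num at hε' ⊢; linarith)
  refine ⟨t, b, hb, fun m ↦ (hxb m).trans ?_⟩
  rw [div_le_iff₀ (by linarith), Fintype.card_fin]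
  norm_num
  nlinarith

lemma exists_goldenValues_abs_inner_sub_le_add (hε : 0 ≤ ε) (hε' : ε ≤ 1 / 10 ^ 200)
    (hx : ∀ i, ‖x i‖ = 1) (hinner : ∀ i j, i ≠ j → ⟪x i, x j⟫ ≤ φ / 2 + 2 * ε)
    (hcard : Fintype.card ι = 120) (i j : ι) (v : EuclideanSpace ℝ (Fin 4)) :
    ∃ z ∈ goldenValues, |⟪x i, v⟫ - toReal z / 2| ≤ 1 / 10 ^ 6 + ‖x j - v‖ := by
  obtain ⟨z, hz, hzx⟩ : ∃ z ∈ goldenValues, |⟪x i, x j⟫ - toReal z / 2| ≤ 1 / 10 ^ 6 := by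
    obtain rfl | hij := eq_or_ne i j
    · exact ⟨2, by decide, by norm_num [hx, map_ofNat]⟩
    · obtain ⟨z, hz, hzx⟩ := exists_goldenValues_abs_inner_sub_le hε hε' hx hinner hcard hij
      exact ⟨z, mem_of_mem_erase hz, hzx⟩
  refine ⟨z, hz, (abs_sub_le _ ⟪x i, x j⟫ _).trans ?_⟩
  rw [add_comm, ← inner_sub_right, norm_sub_rev]
  refine add_le_add hzx ((abs_real_inner_le_norm _ _).trans ?_)
  rw [hx, one_mul]

/-- Rounding the inner products with the frame `b` identifies the vectors with the vertices. -/
lemma exists_equiv_goldenRoots (hε : 0 ≤ ε) (hε' : ε ≤ 1 / 10 ^ 200) (hx : ∀ i, ‖x i‖ = 1)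
    (hinner : ∀ i j, i ≠ j → ⟪x i, x j⟫ ≤ φ / 2 + 2 * ε) (hcard : Fintype.card ι = 120)
    {t : Fin 4 → ι} {b : Fin 4 → EuclideanSpace ℝ (Fin 4)} (hb : IsEquiangular (φ / 2) b)
    (hxb : ∀ m, ‖x (t m) - b m‖ ≤ 1 / 10 ^ 6) :
    ∃ e : ι ≃ goldenRoots, ∀ i, ‖x i - frameVec b (toReal ∘ (e i).1)‖ ≤ 1 / 10 ^ 5 := by
  obtain ⟨hφ, hφ'⟩ := goldenRatio_mem_Ioo
  choose code hcode hnear using fun i ↦ hb.exists_mem_goldenRoots_norm_sub_le (by simp) (hx i)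
    fun m ↦ by
      obtain ⟨z, hz, hzx⟩ :=
        exists_goldenValues_abs_inner_sub_le_add hε hε' hx hinner hcard i (t m) (b m)
      exact ⟨z, hz, by linarith [hxb m]⟩
  let f : ι → goldenRoots := fun i ↦ ⟨code i, hcode i⟩
  have hf : Function.Injective f := fun i j hij ↦ by
    have hcode_eq : code i = code j := congrArg Subtype.val hij
    refine eq_of_norm_sub_le hx (fun i j hne ↦ by linarith [hinner i j hne])
      (v := frameVec b (toReal ∘ code i)) ?_ ?_
    · rw [norm_sub_rev]
      linarith [hnear i]
    · rw [norm_sub_rev, hcode_eq]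
      linarith [hnear j]
  exact ⟨.ofBijective f ((Fintype.bijective_iff_injective_and_card f).2
    ⟨hf, by rw [hcard, Fintype.card_coe, card_goldenRoots]⟩), hnear⟩

lemma norm_sub_frameVec_le_of_norm_sub_le {y : goldenRoots → EuclideanSpace ℝ (Fin 4)}
    (hε : 0 ≤ ε) (hy : ∀ ρ, ‖y ρ‖ = 1) (hinner : ∀ ρ σ, ρ ≠ σ → ⟪y ρ, y σ⟫ ≤ φ / 2 + 2 * ε)
    {t : Fin 4 → goldenRoots} {b : Fin 4 → EuclideanSpace ℝ (Fin 4)}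
    (hb : IsEquiangular (φ / 2) b) (hε' : 10 ^ 20 * ε ≤ 1 / 10 ^ 6)
    (hyb : ∀ m, ‖y (t m) - b m‖ ≤ 10 ^ 20 * ε)
    (hnear : ∀ ρ, ‖y ρ - frameVec b (toReal ∘ ρ.1)‖ ≤ 1 / 10 ^ 5) (ρ : goldenRoots) :
    ‖y ρ - frameVec b (toReal ∘ ρ.1)‖ ≤ 9 ^ 16 * (10 ^ 20 * ε) := by
  obtain ⟨hφ, hφ'⟩ := goldenRatio_mem_Ioo
  have hw (ρ : goldenRoots) := hb.norm_frameVec ρ.2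
  have hww (ρ σ : goldenRoots) (h : ρ ≠ σ) :=
    hb.inner_frameVec_le ρ.2 σ.2 (Subtype.coe_ne_coe.2 h)
  have hbase (ρ : goldenRoots) (m : Fin 4) (hρ : ρ.1 = baseCode m) : ρ = t m := by
    refine eq_of_norm_sub_le hw (fun ρ σ h ↦ by linarith [hww ρ σ h]) (v := y (t m)) ?_
      (by linarith [hnear (t m)])
    rw [hρ, hb.frameVec_baseCode (by simp)]
    linarith [hyb m]
  have hadj (ρ σ : goldenRoots) (h : goldenForm ω ρ.1 σ.1 = ω) :
      |⟪y ρ, y σ⟫ - φ / 2| ≤ 10 ^ 20 * ε := by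
    have hne : ρ ≠ σ := by
      rintro rfl
      exact absurd ((mem_goldenRoots.1 ρ.2).2.symm.trans h) (by decide)
    have hclose := abs_le.1 (abs_inner_sub_inner_le (hy ρ) (hw σ) (u' := frameVec b (toReal ∘ ρ.1))
      (v := y σ))
    rw [hb.inner_frameVec_of_goldenForm_eq_omega h] at hclose
    refine (abs_inner_sub_goldenRatio_div_two_le hε hy hinner ?_ hne ?_).trans (by linarith)
    · rw [Fintype.card_coe, card_goldenRoots]
    · linarith [hnear ρ, hnear σ]
  refine (norm_sub_frameVec_le_pow_rank (by simp) hb hy (fun ρ ↦ (hnear ρ).trans (by norm_num))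
    (by positivity) (fun ρ m hρ ↦ hbase ρ m hρ ▸ hyb m) hadj ρ).trans ?_
  gcongr
  · norm_num
  · exact (exists_cell_of_mem_goldenRoots ρ ρ.2).1

lemma exists_equiv_goldenRoots_norm_sub_le (hε : 0 ≤ ε) (hε' : ε ≤ 1 / 10 ^ 200)
    (hx : ∀ i, ‖x i‖ = 1) (hinner : ∀ i j, i ≠ j → ⟪x i, x j⟫ ≤ φ / 2 + 2 * ε)
    (hcard : Fintype.card ι = 120) :
    ∃ (e : ι ≃ goldenRoots) (b : Fin 4 → EuclideanSpace ℝ (Fin 4)), IsEquiangular (φ / 2) b ∧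
      ∀ i, ‖x i - frameVec b (toReal ∘ (e i).1)‖ ≤ 9 ^ 16 * (10 ^ 20 * ε) := by
  have hB : 10 ^ 20 * ε ≤ 1 / 10 ^ 6 := by norm_num at hε' ⊢; linarith
  obtain ⟨t, b, hb, hxb⟩ := exists_tetrahedron_norm_sub_le hε hε' hx hinner hcard
  obtain ⟨e, he⟩ := exists_equiv_goldenRoots hε hε' hx hinner hcard hb fun m ↦ (hxb m).trans hB
  refine ⟨e, b, hb, fun i ↦ ?_⟩
  simpa using norm_sub_frameVec_le_of_norm_sub_le (y := x ∘ e.symm) hε (fun _ ↦ hx _)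
    (fun ρ σ h ↦ hinner _ _ (e.symm.injective.ne h)) (t := e ∘ t) hb hB (by simpa using hxb)
    (fun ρ ↦ by simpa using he (e.symm ρ)) (e i)

lemma arccos_inner_le_two_mul_norm_sub {E : Type*} [NormedAddCommGroup E] [InnerProductSpace ℝ E]
    {u v : E} (hu : ‖u‖ = 1) (hv : ‖v‖ = 1) : Real.arccos ⟪u, v⟫ ≤ 2 * ‖u - v‖ := by
  obtain ⟨hlow, hupp⟩ := inner_mem_Icc_of_norm_eq_one hu hv
  have hn := norm_sub_sq_real u v
  have hcos := Real.cos_le_one_sub_mul_cos_sq (x := Real.arccos ⟪u, v⟫)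
    (by rw [abs_of_nonneg (Real.arccos_nonneg _)]; exact Real.arccos_le_pi _)
  rw [Real.cos_arccos hlow hupp] at hcos
  have hπ : 2 / 4 ^ 2 * Real.arccos ⟪u, v⟫ ^ 2 ≤ 2 / Real.pi ^ 2 * Real.arccos ⟪u, v⟫ ^ 2 := by
    gcongr
    exact Real.pi_lt_four.le
  rw [hu, hv] at hn
  refine (abs_le_of_sq_le_sq' ?_ (by positivity)).2
  nlinarith

lemma cos_pi_div_five_eq_goldenRatio_div_two : Real.cos (Real.pi / 5) = φ / 2 := by
  rw [Real.cos_pi_div_five, Real.goldenRatio]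
  ring

lemma inner_le_of_pi_div_five_sub_le_arccos {E : Type*} [NormedAddCommGroup E]
    [InnerProductSpace ℝ E] (hε : 0 ≤ ε) (hε' : 2 * ε ≤ Real.pi / 5) {u v : E} (hu : ‖u‖ = 1)
    (hv : ‖v‖ = 1) (h : Real.pi / 5 - 2 * ε ≤ Real.arccos ⟪u, v⟫) :
    ⟪u, v⟫ ≤ φ / 2 + 2 * ε := by
  obtain ⟨hlow, hupp⟩ := inner_mem_Icc_of_norm_eq_one hu hv
  calc ⟪u, v⟫ = Real.cos (Real.arccos ⟪u, v⟫) := (Real.cos_arccos hlow hupp).symm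
    _ ≤ Real.cos (Real.pi / 5 - 2 * ε) :=
        Real.cos_le_cos_of_nonneg_of_le_pi (sub_nonneg.2 hε') (Real.arccos_le_pi _) h
    _ ≤ Real.cos (Real.pi / 5) + |Real.pi / 5 - 2 * ε - Real.pi / 5| := by
        linarith [(abs_le.1 (Real.abs_cos_sub_cos_le (Real.pi / 5 - 2 * ε) (Real.pi / 5))).2]
    _ = φ / 2 + 2 * ε := by
        rw [cos_pi_div_five_eq_goldenRatio_div_two, sub_sub_cancel_left, abs_neg,
          abs_of_nonneg (by positivity)]

lemma pi_div_five_le_arccos {t : ℝ} (ht : t ≤ φ / 2) : Real.pi / 5 ≤ Real.arccos t := by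
  rw [← Real.arccos_cos (x := Real.pi / 5) (by positivity) (by linarith [Real.pi_pos]),
    cos_pi_div_five_eq_goldenRatio_div_two]
  exact Real.arccos_le_arccos ht

lemma exists_equiv_goldenRoots_arccos_inner_le (hε : 0 ≤ ε) (hx : ∀ i, ‖x i‖ = 1)
    (hinner : ∀ i j, i ≠ j → ⟪x i, x j⟫ ≤ φ / 2 + 2 * ε) (hcard : Fintype.card ι = 120) :
    ∃ (e : ι ≃ goldenRoots) (b : Fin 4 → EuclideanSpace ℝ (Fin 4)), IsEquiangular (φ / 2) b ∧
      ∀ i, Real.arccos ⟪x i, frameVec b (toReal ∘ (e i).1)⟫ ≤ 90 ^ 116 * 10 ^ 4 * 10 ^ 12 * ε := by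
  obtain hsmall | hlarge := le_or_gt ε (1 / 10 ^ 200)
  · obtain ⟨e, b, hb, hxw⟩ := exists_equiv_goldenRoots_norm_sub_le hε hsmall hx hinner hcard
    refine ⟨e, b, hb, fun i ↦
      (arccos_inner_le_two_mul_norm_sub (hx i) (hb.norm_frameVec (e i).2)).trans ?_⟩
    calc 2 * ‖x i - frameVec b (toReal ∘ (e i).1)‖ ≤ 2 * (9 ^ 16 * 10 ^ 20) * ε := by
          linarith [hxw i]
      _ ≤ 90 ^ 116 * 10 ^ 4 * 10 ^ 12 * ε :=
          mul_le_mul_of_nonneg_right (by norm_num) hε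
  · obtain ⟨b, hb⟩ := exists_isEquiangular_goldenRatio
    refine ⟨Fintype.equivOfCardEq (by rw [hcard, Fintype.card_coe, card_goldenRoots]), b, hb,
      fun i ↦ ?_⟩
    calc _ ≤ Real.pi := Real.arccos_le_pi _
      _ ≤ 90 ^ 116 * 10 ^ 4 * 10 ^ 12 * (1 / 10 ^ 200) := Real.pi_lt_four.le.trans (by norm_num)
      _ ≤ 90 ^ 116 * 10 ^ 4 * 10 ^ 12 * ε := by gcongr

end Stability

end SixHundredCell

/-- Stability of the 600-cell: if `k ≥ 120` unit vectors in `ℝ⁴` have pairwise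
spherical distances at least `π/5 - 2ε` with `0 ≤ ε < 10⁻¹⁴`, then `k = 120` and the
vectors are within spherical distance `90¹¹⁶·10⁴·10¹²·ε` of the vertices of a regular
600-cell inscribed in the unit sphere (120 unit vectors with pairwise spherical
distances at least `π/5`). -/
theorem sixhundred_cell_stability (k : ℕ) (hk : 120 ≤ k) (ε : ℝ)
    (hε0 : 0 ≤ ε) (hε1 : ε < 1 / 10 ^ 14)
    (x : Fin k → EuclideanSpace ℝ (Fin 4))
    (hx : ∀ i, ‖x i‖ = 1)
    (hdist : ∀ i j : Fin k, i ≠ j →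
      Real.pi / 5 - 2 * ε ≤ Real.arccos ⟪x i, x j⟫) :
    k = 120 ∧
    ∃ w : Fin k → EuclideanSpace ℝ (Fin 4),
      (∀ i, ‖w i‖ = 1) ∧
      (∀ i j : Fin k, i ≠ j → Real.pi / 5 ≤ Real.arccos ⟪w i, w j⟫) ∧
      (∀ i, Real.arccos ⟪x i, w i⟫ ≤ (90 : ℝ) ^ 116 * 10 ^ 4 * 10 ^ 12 * ε) := by
  have hinner (i j : Fin k) (hij : i ≠ j) :=
    SixHundredCell.inner_le_of_pi_div_five_sub_le_arccos hε0 (by linarith [Real.pi_gt_three])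
      (hx i) (hx j) (hdist i j hij)
  have hcard : Fintype.card (Fin k) = 120 :=
    SixHundredCell.card_eq_of_forall_inner_le hε0 hε1
      hx hinner (by rwa [Fintype.card_fin])
  obtain ⟨e, b, hb, hxw⟩ :=
    SixHundredCell.exists_equiv_goldenRoots_arccos_inner_le hε0 hx hinner hcard
  refine ⟨by rwa [Fintype.card_fin] at hcard, _, fun i ↦ hb.norm_frameVec (e i).2,
    fun i j hij ↦ SixHundredCell.pi_div_five_le_arccos ?_, hxw⟩
  exact hb.inner_frameVec_le (e i).2 (e j).2 (Subtype.coe_ne_coe.2 (e.injective.ne hij))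
end

section
/- Let n ≥ 2 and 0 ≤ η < 1/(n−1). If u_1, …, u_n are unit vectors in ℝⁿ satisfying |⟨u_i, u_j⟩| ≤ η for all i ≠ j, then there exists an orthonormal basis v_1, …, v_n of ℝⁿ such that span{u_i, …, u_n} = span{v_i, …, v_n} and ⟨u_i, v_i⟩ > 0 for i = 1, …, n, and |⟨u_i, v_j⟩| ≤ η/(1 − (n−2)η) for all i ≠ j. Moreover, if in addition η < 1/(2n), then the spherical distance satisfies δ(u_i, v_i) ≤ 2nη for i = 1, …, n. -/
open scoped RealInnerProductSpace

/-!
Run Gram–Schmidt from the last vector backwards. When `u_j` is processed, its projection onto the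
span of the `m` vectors already treated is `p = ∑ c_l u_l`, and since the Gram matrix of these
vectors is diagonally dominant, `|c_l| ≤ η / (1 - (m - 1)η)`. Hence `p` is nearly orthogonal to
`u_j` and to all vectors not yet treated, while the residual `w = u_j - p` satisfies
`‖w‖² = 1 - ⟨u_j, p⟩ ≥ 1 - mη² / (1 - (m - 1)η)`. Normalizing `w` gives the off-diagonal bound.
The last inequality also says that the sine of the angle between `u_j` and `w` is at most `mη`, so
that the angle is at most `(π / 2) m η` by Jordan's inequality.
-/

section

open Finset InnerProductSpace
open scoped InnerProductSpace ComplexOrder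

variable {𝕜 E ι : Type*} [RCLike 𝕜] [NormedAddCommGroup E] [InnerProductSpace 𝕜 E]

section GramSchmidt

variable [LinearOrder ι] [LocallyFiniteOrderBot ι] [WellFoundedLT ι] (f : ι → E) (j : ι)

lemma sub_gramSchmidt_mem_span_Iio :
    f j - gramSchmidt 𝕜 f j ∈ Submodule.span 𝕜 (f '' Set.Iio j) := by
  rw [gramSchmidt_def, sub_sub_cancel, ← span_gramSchmidt_Iio]
  refine Submodule.sum_mem _ fun i hi => ?_
  have hsub : {gramSchmidt 𝕜 f i} ⊆ gramSchmidt 𝕜 f '' Set.Iio j :=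
    Set.singleton_subset_iff.2 (Set.mem_image_of_mem _ (mem_Iio.1 hi))
  exact Submodule.span_mono hsub (Submodule.starProjection_apply_mem _ _)

lemma inner_gramSchmidt_eq_norm_sq :
    ⟪f j, gramSchmidt 𝕜 f j⟫_𝕜 = (‖gramSchmidt 𝕜 f j‖ : 𝕜) ^ 2 := by
  have hspan : Submodule.span 𝕜 (f '' Set.Iio j) ≤ (𝕜 ∙ gramSchmidt 𝕜 f j)ᗮ := by
    rw [Submodule.span_le]
    rintro _ ⟨i, hi, rfl⟩
    exact Submodule.mem_orthogonal_singleton_iff_inner_right.2 (gramSchmidt_inv_triangular 𝕜 f hi)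
  have horth : ⟪f j - gramSchmidt 𝕜 f j, gramSchmidt 𝕜 f j⟫_𝕜 = 0 :=
    Submodule.mem_orthogonal_singleton_iff_inner_left.1
      (hspan (sub_gramSchmidt_mem_span_Iio f j))
  rw [← inner_self_eq_norm_sq_to_K, ← sub_eq_zero, ← inner_sub_left, horth]

lemma norm_gramSchmidt_le : ‖gramSchmidt 𝕜 f j‖ ≤ ‖f j‖ := by
  rcases (norm_nonneg (gramSchmidt 𝕜 f j)).eq_or_lt with h0 | hpos
  · exact h0 ▸ norm_nonneg _
  · have hcs := norm_inner_le_norm (𝕜 := 𝕜) (f j) (gramSchmidt 𝕜 f j)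
    rw [inner_gramSchmidt_eq_norm_sq, norm_pow, RCLike.norm_ofReal, abs_norm, sq] at hcs
    exact le_of_mul_le_mul_right hcs hpos

lemma inner_gramSchmidtNormed_eq_norm :
    ⟪f j, gramSchmidtNormed 𝕜 f j⟫_𝕜 = ‖gramSchmidt 𝕜 f j‖ := by
  rw [gramSchmidtNormed, inner_smul_right, inner_gramSchmidt_eq_norm_sq, sq, ← mul_assoc,
    inv_mul_mul_self]

end GramSchmidt

lemma card_Iio_add_one_le [Fintype ι] [Preorder ι] [LocallyFiniteOrderBot ι] (j : ι) :
    (#(Iio j) : ℝ) + 1 ≤ Fintype.card ι := by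
  exact_mod_cast card_lt_univ_of_notMem (s := Iio j) (x := j) (by simp)

lemma arccos_le_pi_div_two_mul {d r : ℝ} (hd : 0 ≤ d) (hr : 0 ≤ r) (hdr : 1 - d ^ 2 ≤ r ^ 2) :
    Real.arccos d ≤ Real.pi / 2 * r := by
  have hjordan : 2 / Real.pi * Real.arccos d ≤ Real.sin (Real.arccos d) :=
    Real.mul_le_sin (Real.arccos_nonneg d) (Real.arccos_le_pi_div_two.2 hd)
  have hsin : Real.sin (Real.arccos d) ≤ r := by
    rw [Real.sin_arccos]
    exact Real.sqrt_le_iff.2 ⟨hr, hdr⟩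
  calc Real.arccos d = Real.pi / 2 * (2 / Real.pi * Real.arccos d) := by field_simp
    _ ≤ Real.pi / 2 * r := by gcongr; exact hjordan.trans hsin

variable (𝕜) in
/-- A family of unit vectors whose pairwise inner products have absolute value at most `η`:
the almost orthogonal systems which Gram–Schmidt changes only slightly. -/
structure AlmostOrthonormal (η : ℝ) (u : ι → E) : Prop where
  norm_eq_one (i : ι) : ‖u i‖ = 1
  norm_inner_le {i j : ι} (hij : i ≠ j) : ‖⟪u i, u j⟫_𝕜‖ ≤ η

namespace AlmostOrthonormal

variable {η : ℝ} {u : ι → E}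

lemma comp_injective {κ : Type*} (hu : AlmostOrthonormal 𝕜 η u) {e : κ → ι}
    (he : Function.Injective e) : AlmostOrthonormal 𝕜 η (u ∘ e) :=
  ⟨fun i => hu.norm_eq_one (e i), fun hij => hu.norm_inner_le (he.ne hij)⟩

section Span

variable {s : Finset ι} {ε : ℝ}

lemma norm_coeff_mul_le (hu : AlmostOrthonormal 𝕜 η u) (hs : ((#s : ℝ) - 1) * η ≤ 1) {c : ι → 𝕜}
    (hc : ∀ k ∈ s, ‖⟪u k, ∑ l ∈ s, c l • u l⟫_𝕜‖ ≤ ε) {k : ι} (hk : k ∈ s) :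
    ‖c k‖ * (1 - ((#s : ℝ) - 1) * η) ≤ ε := by
  classical
  obtain ⟨m, hm, hmax⟩ := s.exists_max_image (fun k => ‖c k‖) ⟨k, hk⟩
  have hsplit : ⟪u m, ∑ l ∈ s, c l • u l⟫_𝕜 = c m + ∑ l ∈ s.erase m, c l * ⟪u m, u l⟫_𝕜 := by
    simp only [inner_sum, inner_smul_right]
    rw [← add_sum_erase s _ hm, inner_self_eq_norm_sq_to_K, hu.norm_eq_one]
    simp
  have hoff : ‖∑ l ∈ s.erase m, c l * ⟪u m, u l⟫_𝕜‖ ≤ ((#s : ℝ) - 1) * (‖c m‖ * η) := by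
    rw [← cast_card_erase_of_mem hm, ← nsmul_eq_mul]
    refine norm_sum_le_of_le _ (fun l hl => ?_) |>.trans_eq (sum_const _)
    obtain ⟨hlm, hl⟩ := mem_erase.1 hl
    rw [norm_mul]
    exact mul_le_mul (hmax l hl) (hu.norm_inner_le hlm.symm) (norm_nonneg _) (norm_nonneg _)
  have hdiag : ‖c m‖ ≤ ε + ((#s : ℝ) - 1) * (‖c m‖ * η) :=
    calc ‖c m‖ = ‖⟪u m, ∑ l ∈ s, c l • u l⟫_𝕜 - ∑ l ∈ s.erase m, c l * ⟪u m, u l⟫_𝕜‖ := by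
          rw [hsplit, add_sub_cancel_right]
      _ ≤ _ := (norm_sub_le _ _).trans (add_le_add (hc m hm) hoff)
  calc ‖c k‖ * (1 - ((#s : ℝ) - 1) * η)
      ≤ ‖c m‖ * (1 - ((#s : ℝ) - 1) * η) :=
        mul_le_mul_of_nonneg_right (hmax k hk) (sub_nonneg.2 hs)
    _ ≤ ε := by linarith

lemma norm_inner_mul_le_of_mem_span (hu : AlmostOrthonormal 𝕜 η u)
    (hs : ((#s : ℝ) - 1) * η ≤ 1) {p : E} (hp : p ∈ Submodule.span 𝕜 (u '' s))
    (hpu : ∀ k ∈ s, ‖⟪u k, p⟫_𝕜‖ ≤ ε) {y : E} {δ : ℝ} (hy : ∀ k ∈ s, ‖⟪y, u k⟫_𝕜‖ ≤ δ) :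
    ‖⟪y, p⟫_𝕜‖ * (1 - ((#s : ℝ) - 1) * η) ≤ #s * (ε * δ) := by
  obtain ⟨c, rfl⟩ := (Submodule.mem_span_image_finset_iff_exists_fun' 𝕜).1 hp
  have hterm : ∀ l ∈ s, ‖c l * ⟪y, u l⟫_𝕜‖ * (1 - ((#s : ℝ) - 1) * η) ≤ ε * δ := fun l hl => by
    rw [norm_mul, mul_right_comm]
    exact mul_le_mul (hu.norm_coeff_mul_le hs hpu hl) (hy l hl) (norm_nonneg _)
      ((norm_nonneg _).trans (hpu l hl))
  simp only [inner_sum, inner_smul_right]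
  calc ‖∑ l ∈ s, c l * ⟪y, u l⟫_𝕜‖ * (1 - ((#s : ℝ) - 1) * η)
      ≤ (∑ l ∈ s, ‖c l * ⟪y, u l⟫_𝕜‖) * (1 - ((#s : ℝ) - 1) * η) :=
        mul_le_mul_of_nonneg_right (norm_sum_le _ _) (sub_nonneg.2 hs)
    _ ≤ #s * (ε * δ) := by
        rw [sum_mul, ← nsmul_eq_mul]
        exact sum_le_card_nsmul _ _ _ hterm

end Span

lemma linearIndependent [Fintype ι] (hu : AlmostOrthonormal 𝕜 η u)
    (hη : ((Fintype.card ι : ℝ) - 1) * η < 1) : LinearIndependent 𝕜 u := by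
  refine Fintype.linearIndependent_iff.2 fun c hc i => norm_le_zero_iff.1 ?_
  have hle : ‖c i‖ * (1 - ((Fintype.card ι : ℝ) - 1) * η) ≤ 0 :=
    hu.norm_coeff_mul_le hη.le (fun k _ => by rw [hc, inner_zero_right, norm_zero]) (mem_univ i)
  exact nonpos_of_mul_nonpos_left hle (sub_pos.2 hη)

variable [LinearOrder ι]

section LocallyFinite

variable [LocallyFiniteOrderBot ι] [WellFoundedLT ι] {i j : ι}

lemma norm_inner_sub_gramSchmidt_mul_le (hu : AlmostOrthonormal 𝕜 η u)
    (hη : ((#(Iio j) : ℝ) - 1) * η ≤ 1) (hij : j ≤ i) :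
    ‖⟪u i, u j - gramSchmidt 𝕜 u j⟫_𝕜‖ * (1 - ((#(Iio j) : ℝ) - 1) * η) ≤ #(Iio j) * η ^ 2 := by
  have hproj : ∀ k ∈ Iio j, ‖⟪u k, u j - gramSchmidt 𝕜 u j⟫_𝕜‖ ≤ η := fun k hk => by
    rw [inner_sub_right, inner_eq_zero_symm.1 (gramSchmidt_inv_triangular 𝕜 u (mem_Iio.1 hk)),
      sub_zero]
    exact hu.norm_inner_le (mem_Iio.1 hk).ne
  have hspan : u j - gramSchmidt 𝕜 u j ∈ Submodule.span 𝕜 (u '' Iio j) := by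
    simpa only [coe_Iio] using sub_gramSchmidt_mem_span_Iio u j
  rw [sq]
  exact hu.norm_inner_mul_le_of_mem_span hη hspan hproj fun k hk =>
    hu.norm_inner_le ((mem_Iio.1 hk).trans_le hij).ne'

lemma one_sub_norm_gramSchmidt_sq_mul_le (hu : AlmostOrthonormal 𝕜 η u)
    (hη : ((#(Iio j) : ℝ) - 1) * η ≤ 1) :
    (1 - ‖gramSchmidt 𝕜 u j‖ ^ 2) * (1 - ((#(Iio j) : ℝ) - 1) * η) ≤ #(Iio j) * η ^ 2 := by
  have hinner : ⟪u j, u j - gramSchmidt 𝕜 u j⟫_𝕜 = ((1 - ‖gramSchmidt 𝕜 u j‖ ^ 2 : ℝ) : 𝕜) := by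
    rw [inner_sub_right, inner_self_eq_norm_sq_to_K, hu.norm_eq_one, inner_gramSchmidt_eq_norm_sq]
    push_cast
    ring
  refine le_trans ?_ (hu.norm_inner_sub_gramSchmidt_mul_le hη le_rfl)
  rw [hinner, RCLike.norm_ofReal]
  exact mul_le_mul_of_nonneg_right (le_abs_self _) (sub_nonneg.2 hη)

lemma norm_inner_gramSchmidt_mul_le (hu : AlmostOrthonormal 𝕜 η u) (hη0 : 0 ≤ η)
    (hη1 : (#(Iio j) : ℝ) * η < 1) (hij : j < i) :
    ‖⟪u i, gramSchmidt 𝕜 u j⟫_𝕜‖ * (1 - #(Iio j) * η) ≤ η * ‖gramSchmidt 𝕜 u j‖ := by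
  have hD : 0 < 1 - ((#(Iio j) : ℝ) - 1) * η := by linarith
  have hnum : ‖⟪u i, gramSchmidt 𝕜 u j⟫_𝕜‖ * (1 - ((#(Iio j) : ℝ) - 1) * η) ≤ η * (1 + η) := by
    have htri : ‖⟪u i, gramSchmidt 𝕜 u j⟫_𝕜‖ ≤ η + ‖⟪u i, u j - gramSchmidt 𝕜 u j⟫_𝕜‖ := by
      rw [← sub_sub_cancel (u j) (gramSchmidt 𝕜 u j), inner_sub_right, sub_sub_cancel]
      exact (norm_sub_le _ _).trans (add_le_add_left (hu.norm_inner_le hij.ne') _)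
    linarith [mul_le_mul_of_nonneg_right htri hD.le,
      hu.norm_inner_sub_gramSchmidt_mul_le (by linarith) hij.le]
  have hden : (1 + η) * (1 - #(Iio j) * η)
      ≤ ‖gramSchmidt 𝕜 u j‖ * (1 - ((#(Iio j) : ℝ) - 1) * η) := by
    have hle : ‖gramSchmidt 𝕜 u j‖ ≤ 1 := hu.norm_eq_one j ▸ norm_gramSchmidt_le u j
    have hsq : ‖gramSchmidt 𝕜 u j‖ ^ 2 ≤ ‖gramSchmidt 𝕜 u j‖ :=
      pow_le_of_le_one (norm_nonneg _) hle two_ne_zero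
    linarith [mul_le_mul_of_nonneg_right hsq hD.le,
      hu.one_sub_norm_gramSchmidt_sq_mul_le (j := j) (by linarith)]
  refine le_of_mul_le_mul_right ?_ hD
  calc ‖⟪u i, gramSchmidt 𝕜 u j⟫_𝕜‖ * (1 - #(Iio j) * η) * (1 - ((#(Iio j) : ℝ) - 1) * η)
      = ‖⟪u i, gramSchmidt 𝕜 u j⟫_𝕜‖ * (1 - ((#(Iio j) : ℝ) - 1) * η) * (1 - #(Iio j) * η) :=
        mul_right_comm _ _ _
    _ ≤ η * (1 + η) * (1 - #(Iio j) * η) :=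
        mul_le_mul_of_nonneg_right hnum (sub_pos.2 hη1).le
    _ ≤ η * (‖gramSchmidt 𝕜 u j‖ * (1 - ((#(Iio j) : ℝ) - 1) * η)) := by
        rw [mul_assoc]
        exact mul_le_mul_of_nonneg_left hden hη0
    _ = η * ‖gramSchmidt 𝕜 u j‖ * (1 - ((#(Iio j) : ℝ) - 1) * η) := (mul_assoc _ _ _).symm

lemma one_sub_norm_gramSchmidt_sq_le (hu : AlmostOrthonormal 𝕜 η u) (hη0 : 0 ≤ η)
    (hη1 : (#(Iio j) : ℝ) * η ≤ 1) :
    1 - ‖gramSchmidt 𝕜 u j‖ ^ 2 ≤ (#(Iio j) * η) ^ 2 := by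
  have hbound := hu.one_sub_norm_gramSchmidt_sq_mul_le (j := j) (by linarith)
  have hsub : 0 ≤ 1 - ‖gramSchmidt 𝕜 u j‖ ^ 2 :=
    sub_nonneg.2 (pow_le_one₀ (norm_nonneg _) (hu.norm_eq_one j ▸ norm_gramSchmidt_le u j))
  rcases (#(Iio j)).eq_zero_or_pos with h0 | hpos
  · simp only [h0, Nat.cast_zero] at hbound ⊢
    linarith [mul_nonneg hsub hη0]
  · have hm : (1 : ℝ) ≤ #(Iio j) := by exact_mod_cast hpos
    have hmD : 1 ≤ #(Iio j) * (1 - ((#(Iio j) : ℝ) - 1) * η) := by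
      linarith [mul_le_mul_of_nonneg_left hη1 (sub_nonneg.2 hm)]
    calc 1 - ‖gramSchmidt 𝕜 u j‖ ^ 2
        ≤ (1 - ‖gramSchmidt 𝕜 u j‖ ^ 2) * (#(Iio j) * (1 - ((#(Iio j) : ℝ) - 1) * η)) :=
          le_mul_of_one_le_right hsub hmD
      _ = #(Iio j) * ((1 - ‖gramSchmidt 𝕜 u j‖ ^ 2) * (1 - ((#(Iio j) : ℝ) - 1) * η)) :=
          mul_left_comm _ _ _
      _ ≤ #(Iio j) * (#(Iio j) * η ^ 2) := mul_le_mul_of_nonneg_left hbound (Nat.cast_nonneg _)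
      _ = (#(Iio j) * η) ^ 2 := by ring

end LocallyFinite

section Fintype

variable [Fintype ι] [LocallyFiniteOrderBot ι] {i j : ι}

lemma inner_gramSchmidtNormed_pos (hu : AlmostOrthonormal 𝕜 η u)
    (hη : ((Fintype.card ι : ℝ) - 1) * η < 1) (j : ι) :
    0 < ⟪u j, gramSchmidtNormed 𝕜 u j⟫_𝕜 := by
  rw [inner_gramSchmidtNormed_eq_norm, RCLike.ofReal_pos, norm_pos_iff]
  exact gramSchmidt_ne_zero j (hu.linearIndependent hη)

lemma norm_inner_gramSchmidtNormed_le (hu : AlmostOrthonormal 𝕜 η u) (hη0 : 0 ≤ η)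
    (hη1 : ((Fintype.card ι : ℝ) - 1) * η < 1) (hij : i ≠ j) :
    ‖⟪u i, gramSchmidtNormed 𝕜 u j⟫_𝕜‖ ≤ η / (1 - ((Fintype.card ι : ℝ) - 2) * η) := by
  have hden : 0 < 1 - ((Fintype.card ι : ℝ) - 2) * η := by linarith
  rcases hij.lt_or_gt with hlt | hgt
  · rw [gramSchmidtNormed, inner_smul_right,
      inner_eq_zero_symm.1 (gramSchmidt_inv_triangular 𝕜 u hlt), mul_zero, norm_zero]
    positivity
  have hcard : (#(Iio j) : ℝ) ≤ Fintype.card ι - 2 := by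
    have hss : (#(Iio j) : ℝ) + 1 ≤ #(Iio i) := by
      exact_mod_cast card_lt_card (Iio_ssubset_Iio hgt)
    linarith [card_Iio_add_one_le i]
  have hmη : #(Iio j) * η ≤ ((Fintype.card ι : ℝ) - 2) * η :=
    mul_le_mul_of_nonneg_right hcard hη0
  have hgs : 0 < ‖gramSchmidt 𝕜 u j‖ :=
    norm_pos_iff.2 (gramSchmidt_ne_zero j (hu.linearIndependent hη1))
  rw [gramSchmidtNormed, inner_smul_right, norm_mul, norm_inv, RCLike.norm_ofReal, abs_norm,
    inv_mul_eq_div, div_le_div_iff₀ hgs hden]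
  calc ‖⟪u i, gramSchmidt 𝕜 u j⟫_𝕜‖ * (1 - ((Fintype.card ι : ℝ) - 2) * η)
      ≤ ‖⟪u i, gramSchmidt 𝕜 u j⟫_𝕜‖ * (1 - #(Iio j) * η) := by gcongr
    _ ≤ η * ‖gramSchmidt 𝕜 u j‖ := hu.norm_inner_gramSchmidt_mul_le hη0 (by linarith) hgt

lemma arccos_inner_gramSchmidtNormed_le (hu : AlmostOrthonormal 𝕜 η u) (hη0 : 0 ≤ η)
    (hη1 : ((Fintype.card ι : ℝ) - 1) * η < 1) (j : ι) :
    Real.arccos (RCLike.re ⟪u j, gramSchmidtNormed 𝕜 u j⟫_𝕜)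
      ≤ Real.pi / 2 * (((Fintype.card ι : ℝ) - 1) * η) := by
  have hmη : #(Iio j) * η ≤ ((Fintype.card ι : ℝ) - 1) * η :=
    mul_le_mul_of_nonneg_right (le_sub_iff_add_le.2 (card_Iio_add_one_le j)) hη0
  rw [inner_gramSchmidtNormed_eq_norm, RCLike.ofReal_re]
  calc Real.arccos ‖gramSchmidt 𝕜 u j‖
      ≤ Real.pi / 2 * (#(Iio j) * η) :=
        arccos_le_pi_div_two_mul (norm_nonneg _) (by positivity)
          (hu.one_sub_norm_gramSchmidt_sq_le hη0 (hmη.trans hη1.le))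
    _ ≤ Real.pi / 2 * (((Fintype.card ι : ℝ) - 1) * η) := by gcongr

end Fintype

end AlmostOrthonormal

theorem almost_orthogonal_general [Fintype ι] [LinearOrder ι] {η : ℝ} (hη0 : 0 ≤ η)
    (hη1 : ((Fintype.card ι : ℝ) - 1) * η < 1) {u : ι → E} (hu : AlmostOrthonormal 𝕜 η u) :
    ∃ v : ι → E,
      Orthonormal 𝕜 v ∧
      (∀ i, Submodule.span 𝕜 (u '' Set.Ici i) = Submodule.span 𝕜 (v '' Set.Ici i)) ∧
      (∀ i, 0 < ⟪u i, v i⟫_𝕜) ∧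
      (∀ i j, i ≠ j → ‖⟪u i, v j⟫_𝕜‖ ≤ η / (1 - ((Fintype.card ι : ℝ) - 2) * η)) ∧
      (∀ i, Real.arccos (RCLike.re ⟪u i, v i⟫_𝕜)
        ≤ Real.pi / 2 * (((Fintype.card ι : ℝ) - 1) * η)) := by
  classical
  let _ : LocallyFiniteOrderBot ιᵒᵈ :=
    .ofIic _ (fun a => univ.filter (· ≤ a)) fun _ _ => by simp
  have huDual : AlmostOrthonormal 𝕜 η (u ∘ OrderDual.ofDual) :=
    hu.comp_injective OrderDual.ofDual.injective
  rw [← Fintype.card_orderDual ι] at hη1 ⊢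
  refine ⟨gramSchmidtNormed 𝕜 (u ∘ OrderDual.ofDual) ∘ OrderDual.toDual, ?_, fun i => ?_,
    fun i => huDual.inner_gramSchmidtNormed_pos hη1 (OrderDual.toDual i),
    fun i j hij =>
      huDual.norm_inner_gramSchmidtNormed_le hη0 hη1 (OrderDual.toDual.injective.ne hij),
    fun i => huDual.arccos_inner_gramSchmidtNormed_le hη0 hη1 (OrderDual.toDual i)⟩
  · exact (gramSchmidtNormed_orthonormal (huDual.linearIndependent hη1)).comp _
      OrderDual.toDual.injective
  · exact ((span_gramSchmidtNormed _ _).trans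
      (span_gramSchmidt_Iic 𝕜 (u ∘ OrderDual.ofDual) (OrderDual.toDual i))).symm

end

/-- Almost orthogonal unit vectors can be approximated by an orthonormal basis:
if `u_1, …, u_n` are unit vectors in `ℝⁿ` with `|⟨u_i,u_j⟩| ≤ η < 1/(n-1)` for `i ≠ j`,
then there is an orthonormal basis `v_1, …, v_n` with matching tail spans,
`⟨u_i, v_i⟩ > 0`, `|⟨u_i, v_j⟩| ≤ η/(1-(n-2)η)` for `i ≠ j`, and, if `η < 1/(2n)`,
`δ(u_i, v_i) ≤ 2nη`. -/
theorem almost_orthogonal (n : ℕ) (hn : 2 ≤ n) (η : ℝ)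
    (hη0 : 0 ≤ η) (hη1 : η < 1 / ((n : ℝ) - 1))
    (u : Fin n → EuclideanSpace ℝ (Fin n))
    (hu : ∀ i, ‖u i‖ = 1)
    (hinner : ∀ i j : Fin n, i ≠ j → |⟪u i, u j⟫| ≤ η) :
    ∃ v : Fin n → EuclideanSpace ℝ (Fin n),
      Orthonormal ℝ v ∧
      (∀ i : Fin n,
        Submodule.span ℝ (u '' Set.Ici i) = Submodule.span ℝ (v '' Set.Ici i)) ∧
      (∀ i, 0 < ⟪u i, v i⟫) ∧
      (∀ i j : Fin n, i ≠ j → |⟪u i, v j⟫| ≤ η / (1 - ((n : ℝ) - 2) * η)) ∧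
      (η < 1 / (2 * (n : ℝ)) → ∀ i, Real.arccos ⟪u i, v i⟫ ≤ 2 * n * η) := by
  have hn1 : (0 : ℝ) < n - 1 := sub_pos.2 (Nat.one_lt_cast.2 hn)
  obtain ⟨v, hv, hspan, hpos, hoff, hangle⟩ := almost_orthogonal_general (𝕜 := ℝ) hη0
    (by rwa [Fintype.card_fin, ← lt_div_iff₀' hn1]) ⟨hu, @hinner⟩
  simp only [Fintype.card_fin] at hoff hangle
  refine ⟨v, hv, hspan, hpos, hoff, fun _ i => (hangle i).trans ?_⟩
  calc Real.pi / 2 * ((n - 1) * η) ≤ 4 / 2 * (n * η) := by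
        gcongr
        exacts [Real.pi_le_four, sub_le_self _ zero_le_one]
    _ = 2 * n * η := by ring
end

section
/- Let d ≥ 2 and let Q_i (i ∈ ℕ) be the real polynomials defined by Q_0(t) = 1, Q_1(t) = t, Q_2(t) = (d·t² − 1)/(d − 1), and (i + d − 2)·Q_{i+1}(t) = (2i + d − 2)·t·Q_i(t) − i·Q_{i−1}(t) for i ≥ 2. Suppose f = f_0·Q_0 + f_1·Q_1 + … + f_k·Q_k for some k ≥ 1 with f_0 > 0 and f_1, …, f_k ≥ 0. Then for every finite set X of unit vectors in ℝ^d one has |X|·f(1) + Σ_{x,y ∈ X, x ≠ y} f(⟨x,y⟩) ≥ |X|²·f_0. -/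
open scoped RealInnerProductSpace Classical

/-!
The kernel `Qₙ(⟨x, y⟩)` on the unit sphere is positive semidefinite (Schoenberg): up to a positive
factor it is a Gram kernel. Homogenizing `Qₙ(⟨x, y⟩)` in `x` gives a harmonic polynomial `Zₙʸ`, and
`Zₙʸ` represents evaluation at `y` on harmonic forms of degree `n` for the Fischer form. Indeed,
multiplication by `⟨y, ·⟩` and by `|x|²` are adjoint to the directional derivative along `y` and to
the Laplacian, so pairing the three-term recurrence with a harmonic form `p` kills the `|x|²` term
and reduces `⟨Zₙ₊₁ʸ, p⟩` to `⟨Zₙʸ, ∂_y p⟩`, while `(∂_y p)(y) = (n + 1) p(y)` by Euler. Thus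
`⟨Zₙˣ, Zₙʸ⟩ = γₙ Qₙ(⟨x, y⟩)` with `γₙ > 0`. Summing `f(⟨x, y⟩)` over all pairs, the terms `i ≥ 1` of
the expansion contribute nonnegatively and the term `i = 0` contributes `|X|² f₀`.
-/

section Gegenbauer

variable {A B : Type*} [CommRing A] [Algebra ℝ A] [CommRing B] [Algebra ℝ B]

/-- The `n`-th Gegenbauer polynomial for dimension `d`, homogenized to total degree `n` in a
variable `t` of degree one and a variable `s` of degree two, and evaluated in a real algebra. The
usual polynomial is the case `s = 1`. For `d ≤ 1` the recursion meets the junk inverse `0⁻¹ = 0`. -/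
noncomputable def homogeneousGegenbauer (d : ℕ) (t s : A) : ℕ → A
  | 0 => 1
  | 1 => t
  | n + 2 => ((n : ℝ) + d - 1)⁻¹ • ((2 * n + d : ℝ) • (t * homogeneousGegenbauer d t s (n + 1)) -
      (n + 1 : ℝ) • (s * homogeneousGegenbauer d t s n))

@[simp] theorem homogeneousGegenbauer_zero (d : ℕ) (t s : A) :
    homogeneousGegenbauer d t s 0 = 1 := rfl

@[simp] theorem homogeneousGegenbauer_one (d : ℕ) (t s : A) :
    homogeneousGegenbauer d t s 1 = t := rfl

theorem natCast_add_sub_one_pos {d : ℕ} (hd : 2 ≤ d) (n : ℕ) : 0 < (n : ℝ) + d - 1 := by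
  have : (2 : ℝ) ≤ d := mod_cast hd
  have : (0 : ℝ) ≤ n := n.cast_nonneg
  linarith

theorem homogeneousGegenbauer_recurrence {d : ℕ} (hd : 2 ≤ d) (t s : A) (n : ℕ) :
    ((n : ℝ) + d - 1) • homogeneousGegenbauer d t s (n + 2) =
      (2 * n + d : ℝ) • (t * homogeneousGegenbauer d t s (n + 1)) -
        (n + 1 : ℝ) • (s * homogeneousGegenbauer d t s n) :=
  smul_inv_smul₀ (natCast_add_sub_one_pos hd n).ne' _

theorem map_homogeneousGegenbauer (φ : A →ₐ[ℝ] B) (d : ℕ) (t s : A) (n : ℕ) :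
    φ (homogeneousGegenbauer d t s n) = homogeneousGegenbauer d (φ t) (φ s) n := by
  induction n using Nat.twoStepInduction with
  | zero => simp
  | one => simp
  | more n ih₀ ih₁ => simp [homogeneousGegenbauer, ih₀, ih₁]

theorem derivation_homogeneousGegenbauer_succ {d : ℕ} (hd : 2 ≤ d) (D : Derivation ℝ A A)
    {t s u : A} (ht : D t = u) (hs : D s = 2 * t * u) (n : ℕ) :
    D (homogeneousGegenbauer d t s (n + 1)) =
      (n + 1 : ℝ) • (u * homogeneousGegenbauer d t s n) := by
  induction n using Nat.twoStepInduction with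
  | zero => simp [ht]
  | one =>
    apply smul_right_injective A (natCast_add_sub_one_pos hd 0).ne'
    have recurrence := congrArg D (homogeneousGegenbauer_recurrence hd t s 0)
    simp only [map_sub, Derivation.map_smul, Derivation.leibniz, ht, hs, smul_eq_mul,
      homogeneousGegenbauer_zero, homogeneousGegenbauer_one, zero_add,
      Derivation.map_one_eq_zero] at recurrence ⊢
    simp only [recurrence]
    push_cast
    algebra
  | more n ih₀ ih₁ =>
    apply smul_right_injective A (natCast_add_sub_one_pos hd (n + 1)).ne'
    have recurrence := congrArg D (homogeneousGegenbauer_recurrence hd t s (n + 1))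
    simp only [map_sub, Derivation.map_smul, Derivation.leibniz, ht, hs, ih₀, ih₁, smul_eq_mul]
      at recurrence
    push_cast at recurrence ⊢
    linear_combination (norm := algebra) recurrence -
      (n + 2 : ℝ) • u * homogeneousGegenbauer_recurrence hd t s n

theorem eq_homogeneousGegenbauer {d : ℕ} (hd : 2 ≤ d) {Q : ℕ → ℝ → ℝ}
    (hQ0 : ∀ t, Q 0 t = 1) (hQ1 : ∀ t, Q 1 t = t)
    (hQ2 : ∀ t, Q 2 t = ((d : ℝ) * t ^ 2 - 1) / ((d : ℝ) - 1))
    (hQrec : ∀ i : ℕ, 2 ≤ i → ∀ t,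
      ((i : ℝ) + (d : ℝ) - 2) * Q (i + 1) t
        = (2 * (i : ℝ) + (d : ℝ) - 2) * t * Q i t - (i : ℝ) * Q (i - 1) t) (n : ℕ) (t : ℝ) :
    Q n t = homogeneousGegenbauer d t 1 n := by
  induction n using Nat.twoStepInduction with
  | zero => exact hQ0 t
  | one => exact hQ1 t
  | more n ih₀ ih₁ =>
    apply mul_left_cancel₀ (natCast_add_sub_one_pos hd n).ne'
    rw [← smul_eq_mul (b := homogeneousGegenbauer d t 1 (n + 2)),
      homogeneousGegenbauer_recurrence hd, ← ih₀, ← ih₁]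
    rcases n with _ | n
    · have : (d : ℝ) - 1 ≠ 0 := by simpa using (natCast_add_sub_one_pos hd 0).ne'
      simp only [hQ0, hQ1, hQ2, zero_add, smul_eq_mul]
      push_cast
      field_simp
      ring
    · have := hQrec (n + 2) (by lia) t
      simp only [smul_eq_mul, show n + 2 - 1 = n + 1 by lia] at this ⊢
      push_cast at this ⊢
      linear_combination this

end Gegenbauer

section Calculus

open MvPolynomial
open scoped Matrix Nat

variable {R σ : Type*} [CommSemiring R]

theorem pderiv_comm (i j : σ) (p : MvPolynomial σ R) :
    pderiv i (pderiv j p) = pderiv j (pderiv i p) := by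
  classical
  ext m
  rcases eq_or_ne i j with rfl | hij
  · rfl
  · simp [coeff_pderiv, hij, hij.symm, add_right_comm m (Finsupp.single i 1), mul_right_comm]

variable [Fintype σ]

/-- The linear form `x ↦ ⟨y, x⟩` as a polynomial. -/
noncomputable def linearForm (y : σ → R) : MvPolynomial σ R := ∑ j, y j • X j

/-- The directional derivative along `y`, acting on polynomials. -/
noncomputable def dirDeriv (y : σ → R) : Derivation R (MvPolynomial σ R) (MvPolynomial σ R) :=
  ∑ j, y j • pderiv j

/-- The Laplacian `∑ ∂ⱼ²`, acting on polynomials. -/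
noncomputable def polyLaplacian : MvPolynomial σ R →ₗ[R] MvPolynomial σ R :=
  ∑ j, (pderiv j).toLinearMap ∘ₗ (pderiv j).toLinearMap

theorem dirDeriv_apply (y : σ → R) (p : MvPolynomial σ R) :
    dirDeriv y p = ∑ j, y j • pderiv j p := by
  rw [dirDeriv, ← Derivation.coeFnAddMonoidHom_apply, map_sum, Finset.sum_apply]
  rfl

theorem polyLaplacian_apply (p : MvPolynomial σ R) :
    polyLaplacian p = ∑ j, pderiv j (pderiv j p) := by
  simp [polyLaplacian]

theorem pderiv_linearForm (y : σ → R) (j : σ) : pderiv j (linearForm y) = C (y j) := by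
  classical
  simp [linearForm, pderiv_X, Pi.single_apply, smul_eq_C_mul]

theorem pderiv_psum_two (j : σ) : pderiv j (psum σ R 2) = 2 • X j := by
  classical
  simp [psum, Derivation.leibniz_pow, pderiv_X, Pi.single_apply]

theorem isHomogeneous_linearForm (y : σ → R) : (linearForm y).IsHomogeneous 1 :=
  IsHomogeneous.sum _ _ _ fun j _ =>
    (homogeneousSubmodule σ R 1).smul_mem (y j) (isHomogeneous_X R j)

theorem isHomogeneous_psum (k : ℕ) : (psum σ R k).IsHomogeneous k :=
  IsHomogeneous.sum _ _ _ fun j _ => isHomogeneous_X_pow j k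

theorem isHomogeneous_dirDeriv {n : ℕ} (y : σ → R) {p : MvPolynomial σ R}
    (hp : p.IsHomogeneous (n + 1)) : (dirDeriv y p).IsHomogeneous n := by
  rw [dirDeriv_apply]
  exact IsHomogeneous.sum _ _ _ fun j _ =>
    (homogeneousSubmodule σ R n).smul_mem (y j) hp.pderiv

theorem eval_dirDeriv_self {n : ℕ} (y : σ → R) {p : MvPolynomial σ R} (hp : p.IsHomogeneous n) :
    eval y (dirDeriv y p) = n * eval y p := by
  simpa [dirDeriv_apply, smul_eval] using congrArg (eval y) hp.sum_X_mul_pderiv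

theorem polyLaplacian_dirDeriv (y : σ → R) (p : MvPolynomial σ R) :
    polyLaplacian (dirDeriv y p) = dirDeriv y (polyLaplacian p) := by
  simp only [polyLaplacian_apply, dirDeriv_apply, map_sum, Derivation.map_smul]
  rw [Finset.sum_comm]
  exact Finset.sum_congr rfl fun i _ => Finset.sum_congr rfl fun j _ => by
    rw [pderiv_comm i j p, pderiv_comm i j]

theorem polyLaplacian_mul (p q : MvPolynomial σ R) :
    polyLaplacian (p * q) =
      polyLaplacian p * q + 2 * ∑ j, pderiv j p * pderiv j q + p * polyLaplacian q := by
  simp only [polyLaplacian_apply, pderiv_mul, map_add, Finset.sum_mul, Finset.mul_sum,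
    ← Finset.sum_add_distrib]
  exact Finset.sum_congr rfl fun _ _ => by ring

theorem polyLaplacian_linearForm (y : σ → R) : polyLaplacian (linearForm y) = 0 := by
  simp [polyLaplacian_apply, pderiv_linearForm]

theorem polyLaplacian_linearForm_mul (y : σ → R) (p : MvPolynomial σ R) :
    polyLaplacian (linearForm y * p) = 2 * dirDeriv y p + linearForm y * polyLaplacian p := by
  simp [polyLaplacian_mul, polyLaplacian_linearForm, pderiv_linearForm, dirDeriv_apply,
    smul_eq_C_mul]

theorem polyLaplacian_psum_two_mul {n : ℕ} {p : MvPolynomial σ R} (hp : p.IsHomogeneous n) :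
    polyLaplacian (psum σ R 2 * p) =
      (2 * Fintype.card σ + 4 * n : R) • p + psum σ R 2 * polyLaplacian p := by
  have laplacian_psum : polyLaplacian (psum σ R 2) = 2 * Fintype.card σ := by
    simp only [polyLaplacian_apply, pderiv_psum_two, map_nsmul, pderiv_X_self]
    simp [mul_comm]
  simp only [polyLaplacian_mul, laplacian_psum, pderiv_psum_two, smul_mul_assoc,
    ← Finset.smul_sum, hp.sum_X_mul_pderiv]
  algebra

theorem prod_factorial_add_single (α : σ →₀ ℕ) (j : σ) :
    ∏ i, ((α + Finsupp.single j 1 : σ →₀ ℕ) i)! = (α j + 1) * ∏ i, (α i)! := by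
  classical
  rw [← Finset.mul_prod_erase _ _ (Finset.mem_univ j),
    ← Finset.mul_prod_erase _ (fun i => (α i)!) (Finset.mem_univ j), ← mul_assoc]
  congr 1
  · simp [Nat.factorial_succ]
  · refine Finset.prod_congr rfl fun i hi => ?_
    simp [(Finset.ne_of_mem_erase hi).symm]

/-- The Fischer (apolar) form `⟨X^α, X^β⟩ = α! δ_{αβ}`, for which multiplication by `Xⱼ` is adjoint
to `∂ⱼ`. -/
noncomputable def fischerForm : MvPolynomial σ R →ₗ[R] MvPolynomial σ R →ₗ[R] R :=
  (basisMonomials σ R).constr R fun α => ((∏ i, (α i)! : ℕ) : R) • lcoeff R α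

theorem fischerForm_monomial (α : σ →₀ ℕ) (a : R) (q : MvPolynomial σ R) :
    fischerForm (monomial α a) q = a * ((∏ i, (α i)! : ℕ) : R) * coeff α q := by
  have : monomial α a = a • basisMonomials σ R α := by simp [smul_monomial]
  rw [this, fischerForm, map_smul, Module.Basis.constr_basis]
  simp [mul_assoc]

theorem fischerForm_one_of_isHomogeneous (y : σ → R) {p : MvPolynomial σ R}
    (hp : p.IsHomogeneous 0) : fischerForm 1 p = eval y p := by
  rw [totalDegree_eq_zero_iff_eq_C.mp ((totalDegree_zero_iff_isHomogeneous σ).mpr hp)]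
  simpa using fischerForm_monomial 0 1 (C (coeff 0 p))

theorem fischerForm_X_mul (j : σ) (p q : MvPolynomial σ R) :
    fischerForm (X j * p) q = fischerForm p (pderiv j q) := by
  induction p using MvPolynomial.induction_on' with
  | monomial α a =>
    have X_mul_monomial : X j * monomial α a = monomial (α + Finsupp.single j 1) a := by
      rw [monomial_add_single, pow_one, mul_comm]
    rw [X_mul_monomial, fischerForm_monomial, fischerForm_monomial, coeff_pderiv,
      prod_factorial_add_single]
    push_cast
    ring
  | add p q hp hq => simp [mul_add, hp, hq]

theorem fischerForm_linearForm_mul (y : σ → R) (p q : MvPolynomial σ R) :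
    fischerForm (linearForm y * p) q = fischerForm p (dirDeriv y q) := by
  simp [linearForm, dirDeriv_apply, Finset.sum_mul, fischerForm_X_mul]

theorem fischerForm_psum_two_mul (p q : MvPolynomial σ R) :
    fischerForm (psum σ R 2 * p) q = fischerForm p (polyLaplacian q) := by
  simp [psum, polyLaplacian_apply, Finset.sum_mul, sq, mul_assoc, fischerForm_X_mul]

theorem fischerForm_self_nonneg {S : Type*} [CommRing S] [LinearOrder S] [IsStrictOrderedRing S]
    (p : MvPolynomial σ S) : 0 ≤ fischerForm p p := by
  have : fischerForm p p = ∑ α ∈ p.support, ((∏ i, (α i)! : ℕ) : S) * coeff α p ^ 2 := by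
    nth_rw 1 [p.as_sum]
    simp only [map_sum, LinearMap.sum_apply, fischerForm_monomial]
    exact Finset.sum_congr rfl fun _ _ => by ring
  rw [this]
  positivity

end Calculus

section Zonal

open MvPolynomial
open scoped Matrix

variable {σ : Type*}

theorem isHomogeneous_homogeneousGegenbauer (d : ℕ) {t s : MvPolynomial σ ℝ}
    (ht : t.IsHomogeneous 1) (hs : s.IsHomogeneous 2) (n : ℕ) :
    (homogeneousGegenbauer d t s n).IsHomogeneous n := by
  induction n using Nat.twoStepInduction with
  | zero => exact isHomogeneous_one σ ℝ
  | one => exact ht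
  | more n ih₀ ih₁ =>
    have mul_t := ht.mul ih₁
    have mul_s := hs.mul ih₀
    rw [show 1 + (n + 1) = n + 2 by ring] at mul_t
    rw [add_comm] at mul_s
    let H := homogeneousSubmodule σ ℝ (n + 2)
    exact H.smul_mem _ (H.sub_mem (H.smul_mem _ mul_t) (H.smul_mem _ mul_s))

variable [Fintype σ]

/-- The zonal harmonic polynomial of degree `n` with pole `y`, that is
`x ↦ |x|ⁿ |y|ⁿ Qₙ(⟨x, y⟩ / (|x| |y|))`, where `|x|²` is the power sum `psum σ ℝ 2`. -/
noncomputable def zonalHarmonic (y : σ → ℝ) : ℕ → MvPolynomial σ ℝ :=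
  homogeneousGegenbauer (Fintype.card σ) (linearForm y) ((y ⬝ᵥ y) • psum σ ℝ 2)

theorem isHomogeneous_zonalHarmonic (y : σ → ℝ) (n : ℕ) : (zonalHarmonic y n).IsHomogeneous n :=
  isHomogeneous_homogeneousGegenbauer _ (isHomogeneous_linearForm y)
    ((homogeneousSubmodule σ ℝ 2).smul_mem _ (isHomogeneous_psum 2)) n

theorem eval_zonalHarmonic (x y : σ → ℝ) (n : ℕ) :
    eval x (zonalHarmonic y n) =
      homogeneousGegenbauer (Fintype.card σ) (y ⬝ᵥ x) ((y ⬝ᵥ y) * (x ⬝ᵥ x)) n := by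
  have eval_linearForm : aeval x (linearForm y) = y ⬝ᵥ x := by
    simp [linearForm, dotProduct]
  have eval_psum : aeval x ((y ⬝ᵥ y) • psum σ ℝ 2) = (y ⬝ᵥ y) * (x ⬝ᵥ x) := by
    simp [psum, dotProduct, sq]
  rw [← coe_aeval_eq_eval, RingHom.coe_coe, zonalHarmonic, map_homogeneousGegenbauer,
    eval_linearForm, eval_psum]

variable [Nontrivial σ]

theorem dirDeriv_zonalHarmonic_succ (y : σ → ℝ) (n : ℕ) :
    dirDeriv y (zonalHarmonic y (n + 1)) = ((n + 1) * (y ⬝ᵥ y) : ℝ) • zonalHarmonic y n := by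
  have dirDeriv_linearForm : dirDeriv y (linearForm y) = C (y ⬝ᵥ y) := by
    simp [dirDeriv_apply, pderiv_linearForm, smul_eq_C_mul, dotProduct]
  have dirDeriv_psum :
      dirDeriv y ((y ⬝ᵥ y) • psum σ ℝ 2) = 2 * linearForm y * C (y ⬝ᵥ y) := by
    have : dirDeriv y (psum σ ℝ 2) = 2 * linearForm y := by
      simp [dirDeriv_apply, pderiv_psum_two, linearForm, Finset.mul_sum]
    rw [Derivation.map_smul, this, smul_eq_C_mul, mul_comm]
  rw [zonalHarmonic, derivation_homogeneousGegenbauer_succ Fintype.one_lt_card _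
    dirDeriv_linearForm dirDeriv_psum, ← smul_eq_C_mul, smul_smul]

theorem zonalHarmonic_recurrence (y : σ → ℝ) (n : ℕ) :
    ((n : ℝ) + Fintype.card σ - 1) • zonalHarmonic y (n + 2) =
      (2 * n + Fintype.card σ : ℝ) • (linearForm y * zonalHarmonic y (n + 1)) -
        ((n + 1) * (y ⬝ᵥ y) : ℝ) • (psum σ ℝ 2 * zonalHarmonic y n) := by
  rw [zonalHarmonic, homogeneousGegenbauer_recurrence Fintype.one_lt_card, smul_mul_assoc,
    smul_smul]

theorem polyLaplacian_zonalHarmonic (y : σ → ℝ) (n : ℕ) :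
    polyLaplacian (zonalHarmonic y n) = 0 := by
  induction n using Nat.twoStepInduction with
  | zero => simp [zonalHarmonic, polyLaplacian_apply]
  | one => exact polyLaplacian_linearForm y
  | more n ih₀ ih₁ =>
    apply smul_right_injective _ (natCast_add_sub_one_pos (Fintype.one_lt_card (α := σ)) n).ne'
    simp only [smul_zero]
    rw [← map_smul, zonalHarmonic_recurrence, map_sub, map_smul, map_smul,
      polyLaplacian_linearForm_mul, polyLaplacian_psum_two_mul (isHomogeneous_zonalHarmonic y n),
      dirDeriv_zonalHarmonic_succ, ih₀, ih₁]
    algebra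

theorem fischerForm_zonalHarmonic_add_two {n : ℕ} (y : σ → ℝ) {p : MvPolynomial σ ℝ}
    (hp : polyLaplacian p = 0) :
    ((n : ℝ) + Fintype.card σ - 1) * fischerForm (zonalHarmonic y (n + 2)) p =
      (2 * n + Fintype.card σ) * fischerForm (zonalHarmonic y (n + 1)) (dirDeriv y p) := by
  have := congrArg (fischerForm · p) (zonalHarmonic_recurrence y n)
  simpa [fischerForm_linearForm_mul, fischerForm_psum_two_mul, hp] using this

variable (σ) in
theorem exists_fischerForm_zonalHarmonic_eq_mul_eval (n : ℕ) :
    ∃ γ : ℝ, 0 < γ ∧ ∀ (y : σ → ℝ) (p : MvPolynomial σ ℝ), p.IsHomogeneous n →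
      polyLaplacian p = 0 → fischerForm (zonalHarmonic y n) p = γ * eval y p := by
  induction n using Nat.twoStepInduction with
  | zero =>
    exact ⟨1, one_pos, fun y p hp _ => by
      simpa [zonalHarmonic] using fischerForm_one_of_isHomogeneous y hp⟩
  | one =>
    refine ⟨1, one_pos, fun y p hp _ => ?_⟩
    calc fischerForm (zonalHarmonic y 1) p
        = fischerForm (linearForm y * 1) p := by simp [zonalHarmonic]
      _ = eval y (dirDeriv y p) := by
        rw [fischerForm_linearForm_mul,
          fischerForm_one_of_isHomogeneous y (isHomogeneous_dirDeriv y hp)]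
      _ = 1 * eval y p := by simpa using eval_dirDeriv_self y hp
  | more n _ ih =>
    obtain ⟨γ, hγ, reproducing⟩ := ih
    have h := natCast_add_sub_one_pos (Fintype.one_lt_card (α := σ)) n
    refine ⟨(2 * n + Fintype.card σ) * (n + 2) / ((n : ℝ) + Fintype.card σ - 1) * γ, by positivity,
      fun y p hp harmonic => ?_⟩
    have dirDeriv_harmonic : polyLaplacian (dirDeriv y p) = 0 := by
      rw [polyLaplacian_dirDeriv, harmonic, map_zero]
    have := fischerForm_zonalHarmonic_add_two (n := n) y harmonic
    rw [reproducing y _ (isHomogeneous_dirDeriv y hp) dirDeriv_harmonic,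
      eval_dirDeriv_self y hp] at this
    push_cast at this
    field_simp
    linear_combination this

theorem sum_mul_homogeneousGegenbauer_dotProduct_nonneg {ι : Type*} (s : Finset ι) (w : ι → ℝ)
    (v : ι → σ → ℝ) (n : ℕ) :
    0 ≤ ∑ i ∈ s, ∑ j ∈ s, w i * w j * homogeneousGegenbauer (Fintype.card σ)
      (v i ⬝ᵥ v j) ((v i ⬝ᵥ v i) * (v j ⬝ᵥ v j)) n := by
  obtain ⟨γ, hγ, reproducing⟩ := exists_fischerForm_zonalHarmonic_eq_mul_eval σ n
  let h : MvPolynomial σ ℝ := ∑ i ∈ s, w i • zonalHarmonic (v i) n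
  refine nonneg_of_mul_nonneg_right ((fischerForm_self_nonneg h).trans_eq ?_) hγ
  simp only [h, map_sum, LinearMap.sum_apply, map_smul, LinearMap.smul_apply, smul_eq_mul,
    Finset.mul_sum]
  refine Finset.sum_congr rfl fun i _ => Finset.sum_congr rfl fun j _ => ?_
  rw [reproducing _ _ (isHomogeneous_zonalHarmonic _ n) (polyLaplacian_zonalHarmonic _ n),
    eval_zonalHarmonic]
  ring

end Zonal

section InnerProductSpace

variable {E : Type*} [NormedAddCommGroup E] [InnerProductSpace ℝ E]

theorem sum_mul_homogeneousGegenbauer_inner_nonneg (hE : 2 ≤ Module.finrank ℝ E) {ι : Type*}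
    (s : Finset ι) (w : ι → ℝ) {v : ι → E} (hv : ∀ i ∈ s, ‖v i‖ = 1) (n : ℕ) :
    0 ≤ ∑ i ∈ s, ∑ j ∈ s,
      w i * w j * homogeneousGegenbauer (Module.finrank ℝ E) ⟪v i, v j⟫ 1 n := by
  have : FiniteDimensional ℝ E := .of_finrank_pos (by lia)
  have : Nontrivial (Fin (Module.finrank ℝ E)) := Fin.nontrivial_iff_two_le.mpr hE
  let coords (i : ι) : Fin (Module.finrank ℝ E) → ℝ := (stdOrthonormalBasis ℝ E).repr (v i)
  have inner_eq (i j : ι) : coords i ⬝ᵥ coords j = ⟪v i, v j⟫ := by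
    rw [← (stdOrthonormalBasis ℝ E).repr.inner_map_map, PiLp.inner_apply]
    simp [coords, dotProduct, mul_comm]
  have inner_self (i : ι) (hi : i ∈ s) : coords i ⬝ᵥ coords i = 1 := by
    rw [inner_eq, real_inner_self_eq_norm_sq, hv i hi, one_pow]
  refine (sum_mul_homogeneousGegenbauer_dotProduct_nonneg s w coords n).trans_eq <|
    Finset.sum_congr rfl fun i hi => Finset.sum_congr rfl fun j hj => ?_
  rw [inner_eq, inner_self i hi, inner_self j hj, mul_one, Fintype.card_fin]

theorem sum_inner_eq_card_mul_add_sum_offDiag {X : Finset E} (hX : ∀ x ∈ X, ‖x‖ = 1)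
    (f : ℝ → ℝ) :
    ∑ x ∈ X, ∑ y ∈ X, f ⟪x, y⟫ = X.card * f 1 + ∑ p ∈ X.offDiag, f ⟪p.1, p.2⟫ := by
  have sum_diag : ∑ x ∈ X, f ⟪x, x⟫ = X.card * f 1 := by
    rw [← nsmul_eq_mul]
    exact Finset.sum_eq_card_nsmul fun x hx => by simp [hX x hx]
  rw [← Finset.sum_product', ← Finset.diag_union_offDiag,
    Finset.sum_union (Finset.disjoint_diag_offDiag X), Finset.sum_diag, sum_diag]

theorem linear_programming_inequality_general {d : ℕ} (hd : 2 ≤ d)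
    (hE : Module.finrank ℝ E = d) {Q : ℕ → ℝ → ℝ}
    (hQ0 : ∀ t, Q 0 t = 1) (hQ1 : ∀ t, Q 1 t = t)
    (hQ2 : ∀ t, Q 2 t = ((d : ℝ) * t ^ 2 - 1) / ((d : ℝ) - 1))
    (hQrec : ∀ i : ℕ, 2 ≤ i → ∀ t,
      ((i : ℝ) + (d : ℝ) - 2) * Q (i + 1) t
        = (2 * (i : ℝ) + (d : ℝ) - 2) * t * Q i t - (i : ℝ) * Q (i - 1) t)
    {k : ℕ} {c : ℕ → ℝ} (hc : ∀ i, 1 ≤ i → i ≤ k → 0 ≤ c i)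
    {f : ℝ → ℝ} (hf : ∀ t, f t = ∑ i ∈ Finset.range (k + 1), c i * Q i t)
    {X : Finset E} (hX : ∀ x ∈ X, ‖x‖ = 1) :
    (X.card : ℝ) ^ 2 * c 0 ≤
      (X.card : ℝ) * f 1 + ∑ p ∈ X.offDiag, f ⟪p.1, p.2⟫ := by
  subst hE
  have kernel_sum_nonneg (i : ℕ) : 0 ≤ ∑ x ∈ X, ∑ y ∈ X, Q i ⟪x, y⟫ := by
    simpa [eq_homogeneousGegenbauer hd hQ0 hQ1 hQ2 hQrec] using
      sum_mul_homogeneousGegenbauer_inner_nonneg hd X 1 (v := id) hX i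
  calc (X.card : ℝ) ^ 2 * c 0
      = c 0 * ∑ x ∈ X, ∑ y ∈ X, Q 0 ⟪x, y⟫ := by simp [hQ0]; ring
    _ ≤ ∑ i ∈ Finset.range (k + 1), c i * ∑ x ∈ X, ∑ y ∈ X, Q i ⟪x, y⟫ := by
      rw [Finset.sum_range_succ', le_add_iff_nonneg_left]
      exact Finset.sum_nonneg fun i hi => mul_nonneg
        (hc _ (by lia) (Finset.mem_range.mp hi)) (kernel_sum_nonneg _)
    _ = ∑ x ∈ X, ∑ y ∈ X, f ⟪x, y⟫ := by
      simp only [hf, Finset.mul_sum]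
      rw [Finset.sum_comm]
      exact Finset.sum_congr rfl fun x _ => Finset.sum_comm
    _ = X.card * f 1 + ∑ p ∈ X.offDiag, f ⟪p.1, p.2⟫ :=
      sum_inner_eq_card_mul_add_sum_offDiag hX f

end InnerProductSpace

/-- The linear programming bound (basic inequality): if `f = f_0 Q_0 + … + f_k Q_k` is a
nonnegative combination of the Gegenbauer polynomials for dimension `d` with `f_0 > 0`,
then every finite set `X` of unit vectors in `ℝ^d` satisfies
`|X| f(1) + ∑_{x ≠ y ∈ X} f(⟨x,y⟩) ≥ |X|² f_0`. -/
theorem linear_programming_inequality (d : ℕ) (hd : 2 ≤ d)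
    (Q : ℕ → ℝ → ℝ)
    (hQ0 : ∀ t, Q 0 t = 1)
    (hQ1 : ∀ t, Q 1 t = t)
    (hQ2 : ∀ t, Q 2 t = ((d : ℝ) * t ^ 2 - 1) / ((d : ℝ) - 1))
    (hQrec : ∀ i : ℕ, 2 ≤ i → ∀ t,
      ((i : ℝ) + (d : ℝ) - 2) * Q (i + 1) t
        = (2 * (i : ℝ) + (d : ℝ) - 2) * t * Q i t - (i : ℝ) * Q (i - 1) t)
    (k : ℕ) (hk : 1 ≤ k)
    (c : ℕ → ℝ) (hc0 : 0 < c 0) (hc : ∀ i, 1 ≤ i → i ≤ k → 0 ≤ c i)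
    (f : ℝ → ℝ) (hf : ∀ t, f t = ∑ i ∈ Finset.range (k + 1), c i * Q i t)
    (X : Finset (EuclideanSpace ℝ (Fin d)))
    (hX : ∀ x ∈ X, ‖x‖ = 1) :
    (X.card : ℝ) ^ 2 * c 0 ≤
      (X.card : ℝ) * f 1 + ∑ p ∈ X.offDiag, f ⟪p.1, p.2⟫ :=
  linear_programming_inequality_general hd finrank_euclideanSpace_fin hQ0 hQ1 hQ2 hQrec hc hf hX
end

section
/- Let n ≥ 2. If Y is a finite set of unit vectors in ℝⁿ such that ⟨x, y⟩ < 1/(2n² − n) for all distinct x, y ∈ Y, then |Y| ≤ 2n. -/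
open scoped RealInnerProductSpace

/-!
Let `N` unit vectors in an `n`-dimensional space have pairwise inner products at most `a ≤ 1`.
The polynomial `(t + 1) * (t - a)` is nonpositive on `[-1, a]`, so its sum over the Gram matrix is
at most its diagonal part `2 * (1 - a) * N`. On the other hand the entries of the Gram matrix have
nonnegative sum, and by Cauchy-Schwarz for the trace of the frame operator the sum of their squares
is at least `N ^ 2 / n`. Comparing, `N * (1 - n * a) ≤ 2 * n * (1 - a)`, which is an equality for
`N = 2 * n + 1` and `a = 1 / (2 * n ^ 2 - n)`; a smaller `a` therefore forces `N < 2 * n + 1`.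
-/

theorem exists_lt_pairwise_le {ι α : Type*} [Finite ι] [LinearOrder α] [NoMinOrder α]
    {f : ι → ι → α} {c : α} (h : Pairwise fun i j => f i j < c) :
    ∃ a < c, Pairwise fun i j => f i j ≤ a := by
  obtain ⟨⟨a, ha⟩, le_a⟩ := Finite.exists_le fun p : {p : ι × ι // p.1 ≠ p.2} =>
    (⟨f p.1.1 p.1.2, h p.2⟩ : Set.Iio c)
  exact ⟨a, ha, fun i j hij => le_a ⟨(i, j), hij⟩⟩

section WelchBound

open InnerProductSpace

variable {𝕜 E ι : Type*} [RCLike 𝕜] [NormedAddCommGroup E] [InnerProductSpace 𝕜 E]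

theorem norm_trace_sq_le_finrank_mul_re_trace_adjoint_comp_self [FiniteDimensional 𝕜 E]
    (T : E →ₗ[𝕜] E) :
    ‖T.trace 𝕜 E‖ ^ 2 ≤ Module.finrank 𝕜 E * RCLike.re ((T.adjoint ∘ₗ T).trace 𝕜 E) := by
  let b := stdOrthonormalBasis 𝕜 E
  have trace_adjoint_comp :
      RCLike.re ((T.adjoint ∘ₗ T).trace 𝕜 E) = ∑ k, ‖T (b k)‖ ^ 2 := by
    simp [LinearMap.trace_eq_sum_inner _ b, LinearMap.adjoint_inner_right]
  calc
    ‖T.trace 𝕜 E‖ ^ 2 ≤ (∑ k, ‖inner 𝕜 (b k) (T (b k))‖) ^ 2 := by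
      rw [LinearMap.trace_eq_sum_inner _ b]
      gcongr
      exact norm_sum_le _ _
    _ ≤ Module.finrank 𝕜 E * ∑ k, ‖inner 𝕜 (b k) (T (b k))‖ ^ 2 := by
      simpa using sq_sum_le_card_mul_sum_sq (s := Finset.univ)
        (f := fun k => ‖inner 𝕜 (b k) (T (b k))‖)
    _ ≤ Module.finrank 𝕜 E * ∑ k, ‖T (b k)‖ ^ 2 := by
      gcongr with k
      simpa using norm_inner_le_norm (𝕜 := 𝕜) (b k) (T (b k))
    _ = Module.finrank 𝕜 E * RCLike.re ((T.adjoint ∘ₗ T).trace 𝕜 E) := by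
      rw [trace_adjoint_comp]

variable [Fintype ι]

variable (𝕜) in
/-- The frame operator `x ↦ ∑ i, ⟪v i, x⟫ • v i` of a finite family of vectors, as a plain linear
map so that its trace is available. -/
noncomputable def frameOperator (v : ι → E) : E →ₗ[𝕜] E :=
  ∑ i, (rankOne 𝕜 (v i) (v i)).toLinearMap

theorem isSymmetric_frameOperator (v : ι → E) : (frameOperator 𝕜 v).IsSymmetric :=
  LinearMap.isSymmetric_sum _ fun i _ => isSymmetric_rankOne_self (v i)

variable [FiniteDimensional 𝕜 E]

theorem trace_frameOperator (v : ι → E) :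
    (frameOperator 𝕜 v).trace 𝕜 E = ((∑ i, ‖v i‖ ^ 2 : ℝ) : 𝕜) := by
  simp [frameOperator, trace_rankOne, inner_self_eq_norm_sq_to_K]

theorem trace_frameOperator_comp_self (v : ι → E) :
    (frameOperator 𝕜 v ∘ₗ frameOperator 𝕜 v).trace 𝕜 E =
      ((∑ i, ∑ j, ‖inner 𝕜 (v i) (v j)‖ ^ 2 : ℝ) : 𝕜) := by
  have trace_rankOne_mul_rankOne (x y : E) :
      ((rankOne 𝕜 x x).toLinearMap * (rankOne 𝕜 y y).toLinearMap).trace 𝕜 E =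
        ((‖inner 𝕜 x y‖ ^ 2 : ℝ) : 𝕜) := by
    rw [Module.End.mul_eq_comp, ← ContinuousLinearMap.toLinearMap_comp, rankOne_comp_rankOne,
      ContinuousLinearMap.toLinearMap_smul, map_smul, trace_rankOne, smul_eq_mul,
      ← inner_conj_symm y x, RCLike.mul_conj, RCLike.ofReal_pow]
  simp only [frameOperator, ← Module.End.mul_eq_comp, Finset.sum_mul_sum, map_sum,
    trace_rankOne_mul_rankOne]

/-- The first-order Welch bound. -/
theorem sq_sum_norm_sq_le_finrank_mul_sum_norm_inner_sq (v : ι → E) :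
    (∑ i, ‖v i‖ ^ 2) ^ 2 ≤
      Module.finrank 𝕜 E * ∑ i, ∑ j, ‖inner 𝕜 (v i) (v j)‖ ^ 2 := by
  have h := norm_trace_sq_le_finrank_mul_re_trace_adjoint_comp_self (frameOperator 𝕜 v)
  rwa [(isSymmetric_frameOperator v).adjoint_eq, trace_frameOperator,
    trace_frameOperator_comp_self, RCLike.ofReal_re, RCLike.norm_ofReal, sq_abs] at h

end WelchBound

section LinearProgrammingBound

variable {E ι : Type*} [NormedAddCommGroup E] [InnerProductSpace ℝ E] [Fintype ι]
  {v : ι → E} {a : ℝ}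

theorem sum_sum_inner_nonneg (v : ι → E) : 0 ≤ ∑ i, ∑ j, ⟪v i, v j⟫ := by
  simpa only [inner_sum, sum_inner, real_inner_comm] using
    real_inner_self_nonneg (x := ∑ i, v i)

theorem sum_inner_add_one_mul_inner_sub_le (hv : ∀ i, ‖v i‖ = 1)
    (ha : Pairwise fun i j => ⟪v i, v j⟫ ≤ a) :
    ∑ i, ∑ j, (⟪v i, v j⟫ + 1) * (⟪v i, v j⟫ - a) ≤ Fintype.card ι * (2 * (1 - a)) := by
  classical
  have entry_le (i j : ι) :
      (⟪v i, v j⟫ + 1) * (⟪v i, v j⟫ - a) ≤ if i = j then 2 * (1 - a) else 0 := by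
    split_ifs with hij
    · rw [hij, real_inner_self_eq_norm_sq, hv]
      norm_num
    · have neg_one_le : -1 ≤ ⟪v i, v j⟫ := by
        simpa [hv] using neg_le_of_abs_le (abs_real_inner_le_norm (v i) (v j))
      exact mul_nonpos_of_nonneg_of_nonpos (by linarith) (sub_nonpos.2 (ha hij))
  calc
    _ ≤ ∑ i : ι, ∑ j : ι, if i = j then 2 * (1 - a) else 0 := by
      gcongr with i _ j
      exact entry_le i j
    _ = Fintype.card ι * (2 * (1 - a)) := by simp

variable [FiniteDimensional ℝ E]

theorem card_sq_mul_le_finrank_mul_sum_inner_add_one_mul_inner_sub (hv : ∀ i, ‖v i‖ = 1)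
    (ha : a ≤ 1) :
    (Fintype.card ι : ℝ) ^ 2 * (1 - Module.finrank ℝ E * a) ≤
      Module.finrank ℝ E * ∑ i, ∑ j, (⟪v i, v j⟫ + 1) * (⟪v i, v j⟫ - a) := by
  have welch : (Fintype.card ι : ℝ) ^ 2 ≤
      Module.finrank ℝ E * ∑ i, ∑ j, ⟪v i, v j⟫ ^ 2 := by
    simpa [hv] using sq_sum_norm_sq_le_finrank_mul_sum_norm_inner_sq (𝕜 := ℝ) v
  have expand : ∑ i, ∑ j, (⟪v i, v j⟫ + 1) * (⟪v i, v j⟫ - a) =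
      ∑ i, ∑ j, ⟪v i, v j⟫ ^ 2 + (1 - a) * ∑ i, ∑ j, ⟪v i, v j⟫ -
        a * (Fintype.card ι : ℝ) ^ 2 := by
    have expand_entry (t : ℝ) : (t + 1) * (t - a) = t ^ 2 + (1 - a) * t - a := by ring
    simp only [expand_entry, Finset.sum_sub_distrib, Finset.sum_add_distrib, ← Finset.mul_sum,
      Finset.sum_const, Finset.card_univ, nsmul_eq_mul]
    ring
  have linear_nonneg : 0 ≤ Module.finrank ℝ E * ((1 - a) * ∑ i, ∑ j, ⟪v i, v j⟫) :=
    mul_nonneg (Nat.cast_nonneg _) (mul_nonneg (sub_nonneg.2 ha) (sum_sum_inner_nonneg v))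
  rw [expand]
  linarith

theorem card_mul_one_sub_finrank_mul_le (hv : ∀ i, ‖v i‖ = 1) (ha : a ≤ 1)
    (h : Pairwise fun i j => ⟪v i, v j⟫ ≤ a) :
    Fintype.card ι * (1 - Module.finrank ℝ E * a) ≤ 2 * Module.finrank ℝ E * (1 - a) := by
  rcases isEmpty_or_nonempty ι with _ | _
  · simpa using mul_nonneg (by positivity : 0 ≤ 2 * (Module.finrank ℝ E : ℝ)) (sub_nonneg.2 ha)
  refine le_of_mul_le_mul_left ?_ (Nat.cast_pos.2 (Fintype.card_pos (α := ι)) : (0 : ℝ) < _)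
  calc
    (Fintype.card ι : ℝ) * (Fintype.card ι * (1 - Module.finrank ℝ E * a)) =
        (Fintype.card ι : ℝ) ^ 2 * (1 - Module.finrank ℝ E * a) := by ring
    _ ≤ Module.finrank ℝ E * ∑ i, ∑ j, (⟪v i, v j⟫ + 1) * (⟪v i, v j⟫ - a) :=
      card_sq_mul_le_finrank_mul_sum_inner_add_one_mul_inner_sub hv ha
    _ ≤ Module.finrank ℝ E * (Fintype.card ι * (2 * (1 - a))) := by
      gcongr
      exact sum_inner_add_one_mul_inner_sub_le hv h
    _ = Fintype.card ι * (2 * Module.finrank ℝ E * (1 - a)) := by ring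

theorem almost_cross_general (hv : ∀ i, ‖v i‖ = 1)
    (h : Pairwise fun i j =>
      ⟪v i, v j⟫ < 1 / (2 * (Module.finrank ℝ E : ℝ) ^ 2 - Module.finrank ℝ E)) :
    Fintype.card ι ≤ 2 * Module.finrank ℝ E := by
  rcases isEmpty_or_nonempty ι with _ | ⟨⟨i₀⟩⟩
  · simp
  have one_le_finrank : (1 : ℝ) ≤ Module.finrank ℝ E := by
    have ne_zero : v i₀ ≠ 0 := norm_ne_zero_iff.1 (by simp [hv])
    exact_mod_cast Module.finrank_pos_iff_exists_ne_zero.2 ⟨v i₀, ne_zero⟩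
  have one_le_denom : (1 : ℝ) ≤ 2 * (Module.finrank ℝ E : ℝ) ^ 2 - Module.finrank ℝ E := by
    nlinarith
  obtain ⟨a, a_lt, inner_le⟩ : ∃ a < 1 / (2 * (Module.finrank ℝ E : ℝ) ^ 2 - Module.finrank ℝ E),
      Pairwise fun i j => ⟪v i, v j⟫ ≤ a := exists_lt_pairwise_le h
  have a_le_one : a ≤ 1 := a_lt.le.trans (div_le_one_of_le₀ one_le_denom (by linarith))
  have bound := card_mul_one_sub_finrank_mul_le hv a_le_one inner_le
  rw [lt_div_iff₀ (by linarith)] at a_lt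
  have finrank_mul_le_one : Module.finrank ℝ E * a ≤ 1 := by nlinarith
  by_contra! card_gt
  have card_ge : (2 * Module.finrank ℝ E + 1 : ℝ) ≤ Fintype.card ι := by exact_mod_cast card_gt
  have upper_bound : (2 * Module.finrank ℝ E + 1) * (1 - Module.finrank ℝ E * a) ≤
      2 * Module.finrank ℝ E * (1 - a) :=
    (mul_le_mul_of_nonneg_right card_ge (sub_nonneg.2 finrank_mul_le_one)).trans bound
  refine lt_irrefl (0 : ℝ) ?_
  calc
    0 < 1 - a * (2 * (Module.finrank ℝ E : ℝ) ^ 2 - Module.finrank ℝ E) := sub_pos.2 a_lt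
    _ = (2 * Module.finrank ℝ E + 1) * (1 - Module.finrank ℝ E * a) -
        2 * Module.finrank ℝ E * (1 - a) := by ring
    _ ≤ 0 := sub_nonpos.2 upper_bound

end LinearProgrammingBound

/-- If all pairwise inner products of a finite set of unit vectors in `ℝⁿ` are less
than `1/(2n² - n)`, then the set has at most `2n` elements. -/
theorem almost_cross (n : ℕ) (hn : 2 ≤ n)
    (Y : Finset (EuclideanSpace ℝ (Fin n)))
    (hY : ∀ y ∈ Y, ‖y‖ = 1)
    (hinner : ∀ x ∈ Y, ∀ y ∈ Y, x ≠ y → ⟪x, y⟫ < 1 / (2 * (n : ℝ) ^ 2 - n)) :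
    Y.card ≤ 2 * n := by
  simpa using almost_cross_general (v := ((↑) : Y → EuclideanSpace ℝ (Fin n)))
    (fun y => hY y y.2) fun x y hxy => by
      simpa using hinner x x.2 y y.2 (Subtype.coe_ne_coe.2 hxy)
end
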